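/- arXiv:1203.2445 — 2 statements merged into one kernel-verified Lean document; each statement's English description precedes it below -/
import Mathlib

section
/- Let 0 < s < 2 and let f : [-1,1] → ℝ be a continuous function of class X^s. Then there is a constant C > 0 (depending only on f and s) such that for every n ≥ 1 the error of the n-point Gauss rule satisfies |E_n^G(f)| ≤ C · n^{-3s/2}. -/
/-- The `m`-th Chebyshev coefficient of `f`:
`a_m = (2/π) ∫_0^π f(cos θ) cos(mθ) dθ`. -/
noncomputable def chebCoeff (f : ℝ → ℝ) (m : ℕ) : ℝ :=
  (2 / Real.pi) * ∫ θ in (0:ℝ)..Real.pi, f (Real.cos θ) * Real.cos (m * θ)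

/-!
In Liouville normal form the Legendre equation is a small perturbation of `u'' = -(n + 1/2)² u`, so
the Gauss nodes `cos θ` satisfy `sin θ |cos ((2n + 1) θ)| ≤ 1 / (2n + 1)`: they are almost roots of
`T_{2n+1}`. Comparing `T_{2n+1}²` at the nodes with the kernel `∑_{N < n} U_N²`, which the rule
integrates exactly, shows that the weighted sum `δ` of `|T_{2n+1}|` over the nodes is
`O(√(log n) / n)`.

At exact roots of `T_{2n+1}`, the polynomial `T_{r + j(4n+2)}` would coincide with `(-1)^j T_r`; at
the Gauss nodes the two differ on average by at most `2jδ`. So the error on `T_{r + j(4n+2)}` is, up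
to a summable function of `r`, at most a multiple of `min (1, jδ) ≤ (jδ)^t`. Choosing
`s/2 < t < min (1, s)` makes the sum over `j` of the Chebyshev coefficients times these errors
converge, and its size is `n · n^{-s-1} · δ^t = O(n^{-3s/2})`.
-/

section Legendre

open Polynomial

/-- Integration over `[-1, 1]` as a linear functional on real polynomials. -/
noncomputable def polyIntegral : ℝ[X] →ₗ[ℝ] ℝ where
  toFun p := ∫ t in (-1 : ℝ)..1, p.eval t
  map_add' p q := by
    simp only [eval_add]
    exact intervalIntegral.integral_add (p.continuous.intervalIntegrable _ _)
      (q.continuous.intervalIntegrable _ _)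
  map_smul' c p := by
    simp only [eval_smul, smul_eq_mul, RingHom.id_apply, intervalIntegral.integral_const_mul]

theorem polyIntegral_apply (p : ℝ[X]) : polyIntegral p = ∫ t in (-1 : ℝ)..1, p.eval t := rfl

theorem polyIntegral_derivative (p : ℝ[X]) :
    polyIntegral (derivative p) = p.eval 1 - p.eval (-1) :=
  intervalIntegral.integral_eq_sub_of_hasDerivAt (fun x _ ↦ p.hasDerivAt x)
    ((derivative p).continuous.intervalIntegrable _ _)

theorem polyIntegral_comp_neg_X (p : ℝ[X]) : polyIntegral (p.comp (-X)) = polyIntegral p := by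
  simp only [polyIntegral_apply, eval_comp, eval_neg, eval_X]
  simpa using intervalIntegral.integral_comp_neg (a := -1) (b := 1) fun t ↦ p.eval t

theorem eq_zero_of_polyIntegral_mul_self {p : ℝ[X]} (h : polyIntegral (p * p) = 0) : p = 0 := by
  refine eq_zero_of_infinite_isRoot p
    ((Set.Icc_infinite (show (-1 : ℝ) < 1 by norm_num)).mono fun t ht ↦ ?_)
  by_contra hne
  have hpos : 0 < polyIntegral (p * p) :=
    intervalIntegral.integral_pos (by norm_num) (p * p).continuous.continuousOn
      (fun x _ ↦ by rw [eval_mul]; exact mul_self_nonneg _)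
      ⟨t, ht, by rw [eval_mul]; exact mul_self_pos.2 hne⟩
  exact hpos.ne h.symm

/-- `P` is a (not necessarily normalised) Legendre polynomial of degree `n`: it has degree `n` and
is orthogonal on `[-1, 1]` to all polynomials of lower degree. -/
structure IsLegendre (n : ℕ) (P : ℝ[X]) : Prop where
  degree_eq : P.degree = n
  orthogonal : ∀ q : ℝ[X], q.degree < n → polyIntegral (P * q) = 0

/-- The Legendre differential operator `p ↦ ((1 - X²) p')'`. -/
noncomputable def legendreOp : ℝ[X] →ₗ[ℝ] ℝ[X] :=
  derivative ∘ₗ LinearMap.mulLeft ℝ (1 - X ^ 2) ∘ₗ derivative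

theorem legendreOp_apply (p : ℝ[X]) : legendreOp p = derivative ((1 - X ^ 2) * derivative p) := rfl

theorem coeff_legendreOp (p : ℝ[X]) (m : ℕ) :
    (legendreOp p).coeff m = (m + 2) * (m + 1) * p.coeff (m + 2) - m * (m + 1) * p.coeff m := by
  have h : (1 - X ^ 2) * derivative p = derivative p - X * (X * derivative p) := by ring
  rw [legendreOp_apply, h, derivative_sub, coeff_sub, coeff_derivative, coeff_derivative,
    coeff_derivative, coeff_X_mul]
  rcases m with _ | m
  · simp; ring
  · rw [coeff_X_mul, coeff_derivative]; push_cast; ring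

theorem polyIntegral_legendreOp_mul (p q : ℝ[X]) :
    polyIntegral (legendreOp p * q) = polyIntegral (p * legendreOp q) := by
  have h : derivative ((1 - X ^ 2) * (derivative p * q - p * derivative q)) =
      legendreOp p * q - p * legendreOp q := by
    simp only [legendreOp_apply, derivative_mul, derivative_sub]; ring
  have hwronskian := polyIntegral_derivative ((1 - X ^ 2) * (derivative p * q - p * derivative q))
  rw [h, map_sub] at hwronskian
  exact sub_eq_zero.1 (hwronskian.trans (by simp))

theorem coeff_comp_neg_X {R : Type*} [CommRing R] (p : R[X]) (m : ℕ) :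
    (p.comp (-X)).coeff m = (-1) ^ m * p.coeff m := by
  rw [show (-X : R[X]) = C (-1) * X by simp, comp_C_mul_X_coeff, mul_comm]

/-- A symmetric operator that preserves the degree filtration has the Legendre polynomials as its
eigenvectors. -/
theorem IsLegendre.eigenvector {n : ℕ} {P : ℝ[X]} (hP : IsLegendre n P) {L : ℝ[X] →ₗ[ℝ] ℝ[X]}
    {μ : ℝ} (hsymm : ∀ p q, polyIntegral (L p * q) = polyIntegral (p * L q))
    (hlower : ∀ q : ℝ[X], q.degree < n → (L q).degree < n) (htop : (L P - μ • P).degree < n) :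
    L P = μ • P := by
  rw [← sub_eq_zero]
  apply eq_zero_of_polyIntegral_mul_self
  calc polyIntegral ((L P - μ • P) * (L P - μ • P))
      = polyIntegral (P * L (L P - μ • P)) - μ * polyIntegral (P * (L P - μ • P)) := by
        conv_lhs => rw [sub_mul, map_sub, hsymm, smul_mul_assoc, map_smul, smul_eq_mul]
    _ = 0 := by
        rw [hP.orthogonal _ (hlower _ htop), hP.orthogonal _ htop, mul_zero, sub_zero]

theorem IsLegendre.ne_zero {n : ℕ} {P : ℝ[X]} (hP : IsLegendre n P) : P ≠ 0 := by
  rintro rfl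
  simpa using hP.degree_eq

theorem IsLegendre.coeff_eq_zero {n m : ℕ} {P : ℝ[X]} (hP : IsLegendre n P) (h : n < m) :
    P.coeff m = 0 :=
  coeff_eq_zero_of_degree_lt (by rw [hP.degree_eq]; exact_mod_cast h)

theorem IsLegendre.legendreOp_eq {n : ℕ} {P : ℝ[X]} (hP : IsLegendre n P) :
    legendreOp P = (-(n * (n + 1)) : ℝ) • P := by
  refine hP.eigenvector polyIntegral_legendreOp_mul (fun q hq ↦ ?_) ?_ <;>
    rw [degree_lt_iff_coeff_zero] at *
  · intro m hm
    rw [coeff_legendreOp, hq m hm, hq (m + 2) (by lia), mul_zero, mul_zero, sub_zero]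
  · intro m hm
    rw [coeff_sub, coeff_legendreOp, coeff_smul, hP.coeff_eq_zero (by lia : n < m + 2), smul_eq_mul]
    obtain rfl | hlt := hm.eq_or_lt
    · ring
    · rw [hP.coeff_eq_zero hlt]; ring

theorem IsLegendre.comp_neg_X {n : ℕ} {P : ℝ[X]} (hP : IsLegendre n P) :
    P.comp (-X) = ((-1) ^ n : ℝ) • P := by
  refine hP.eigenvector (L := (aeval (-X)).toLinearMap) (fun p q ↦ ?_) (fun q hq ↦ ?_) ?_ <;>
    simp only [AlgHom.toLinearMap_apply, ← comp_eq_aeval, degree_lt_iff_coeff_zero] at *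
  · rw [← polyIntegral_comp_neg_X (p * q.comp (-X)), mul_comp, comp_assoc]
    simp
  · intro m hm
    rw [coeff_comp_neg_X, hq m hm, mul_zero]
  · intro m hm
    rw [coeff_sub, coeff_comp_neg_X, coeff_smul, smul_eq_mul]
    obtain rfl | hlt := hm.eq_or_lt
    · ring
    · rw [hP.coeff_eq_zero hlt]; ring

theorem IsLegendre.coeff_zero_mul_coeff_one {n : ℕ} {P : ℝ[X]} (hP : IsLegendre n P) :
    P.coeff 0 * P.coeff 1 = 0 := by
  have h0 := congrArg (coeff · 0) hP.comp_neg_X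
  have h1 := congrArg (coeff · 1) hP.comp_neg_X
  simp only [coeff_comp_neg_X, coeff_smul, smul_eq_mul] at h0 h1
  rcases neg_one_pow_eq_or ℝ n with hn | hn <;> rw [hn] at h0 h1
  · rw [show P.coeff 1 = 0 by linarith, mul_zero]
  · rw [show P.coeff 0 = 0 by linarith, zero_mul]

theorem eq_zero_of_legendreOp_eq_smul {p : ℝ[X]} {μ : ℝ} (h : legendreOp p = μ • p)
    (h0 : p.coeff 0 = 0) (h1 : p.coeff 1 = 0) : p = 0 := by
  ext m
  induction m using Nat.twoStepInduction with
  | zero => simpa using h0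
  | one => simpa using h1
  | more m hm _ =>
    have hrec := congrArg (coeff · m) h
    simp only [coeff_legendreOp, coeff_smul, hm, coeff_zero, smul_zero, mul_zero, sub_zero] at hrec
    exact (mul_eq_zero.1 hrec).resolve_left (by positivity)

theorem IsLegendre.coeff_zero_ne_zero_or {n : ℕ} {P : ℝ[X]} (hP : IsLegendre n P) :
    P.coeff 0 ≠ 0 ∨ P.coeff 1 ≠ 0 := by
  by_contra! h
  exact hP.ne_zero (eq_zero_of_legendreOp_eq_smul hP.legendreOp_eq h.1 h.2)

end Legendre

section Oscillation

open Real Set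

/-- Sonin's monotone amplitude for `u'' = -Q u`. -/
theorem monotoneOn_sq_add_sq_div {u v Q Q' : ℝ → ℝ} {a b : ℝ}
    (hu : ∀ x ∈ Icc a b, HasDerivAt u (v x) x)
    (hv : ∀ x ∈ Icc a b, HasDerivAt v (-(Q x * u x)) x)
    (hQ : ∀ x ∈ Icc a b, HasDerivAt Q (Q' x) x)
    (hQpos : ∀ x ∈ Icc a b, 0 < Q x) (hQ' : ∀ x ∈ Icc a b, Q' x ≤ 0) :
    MonotoneOn (fun x ↦ u x ^ 2 + v x ^ 2 / Q x) (Icc a b) := by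
  have hderiv : ∀ x ∈ Icc a b, HasDerivAt (fun x ↦ u x ^ 2 + v x ^ 2 / Q x)
      (v x ^ 2 * -Q' x / Q x ^ 2) x := fun x hx ↦ by
    refine (((hu x hx).pow 2).add (((hv x hx).pow 2).div (hQ x hx) (hQpos x hx).ne')).congr_deriv ?_
    have := (hQpos x hx).ne'
    simp only [Pi.pow_apply]
    field_simp
    ring
  refine monotoneOn_of_hasDerivWithinAt_nonneg (convex_Icc a b)
    (f' := fun x ↦ v x ^ 2 * -Q' x / Q x ^ 2)
    (fun x hx ↦ (hderiv x hx).continuousAt.continuousWithinAt)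
    (fun x hx ↦ (hderiv x (interior_subset hx)).hasDerivWithinAt) fun x hx ↦ ?_
  have := hQ' x (interior_subset hx)
  exact div_nonneg (mul_nonneg (sq_nonneg _) (by linarith)) (sq_nonneg _)

/-- A solution of `u'' = -(ν² + q) u` started at a zero stays close in phase to one of
`u'' = -ν² u`. -/
theorem abs_phase_le {u v q G : ℝ → ℝ} {a b ν B : ℝ} (hab : a ≤ b)
    (hu : ∀ x ∈ Icc a b, HasDerivAt u (v x) x)
    (hv : ∀ x ∈ Icc a b, HasDerivAt v (-((ν ^ 2 + q x) * u x)) x)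
    (hG : ∀ x ∈ Icc a b, HasDerivAt G (q x) x) (hq : ∀ x ∈ Icc a b, 0 ≤ q x)
    (hB : ∀ x ∈ Icc a b, |u x| ≤ B) (ha : u a = 0) :
    |ν * u b * cos (ν * (b - a)) - v b * sin (ν * (b - a))| ≤ B * (G b - G a) := by
  have hderiv : ∀ x ∈ Icc a b,
      HasDerivAt (fun x ↦ ν * u x * cos (ν * (x - a)) - v x * sin (ν * (x - a)))
        (q x * u x * sin (ν * (x - a))) x := fun x hx ↦ by
    have hlin : HasDerivAt (fun x ↦ ν * (x - a)) ν x := by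
      simpa using ((hasDerivAt_id x).sub_const a).const_mul ν
    exact ((((hu x hx).const_mul ν).mul hlin.cos).sub ((hv x hx).mul hlin.sin)).congr_deriv
      (by ring)
  have hmaj : ∀ x ∈ Icc a b, HasDerivAt (fun x ↦ B * (G x - G a)) (B * q x) x := fun x hx ↦
    ((hG x hx).sub_const (G a)).const_mul B
  refine image_norm_le_of_norm_deriv_right_le_deriv_boundary'
    (f := fun x ↦ ν * u x * cos (ν * (x - a)) - v x * sin (ν * (x - a)))
    (B := fun x ↦ B * (G x - G a))
    (fun x hx ↦ (hderiv x hx).continuousAt.continuousWithinAt)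
    (fun x hx ↦ (hderiv x (Ico_subset_Icc_self hx)).hasDerivWithinAt) (by simp [ha])
    (fun x hx ↦ (hmaj x hx).continuousAt.continuousWithinAt)
    (fun x hx ↦ (hmaj x (Ico_subset_Icc_self hx)).hasDerivWithinAt) (fun x hx ↦ ?_)
    (right_mem_Icc.2 hab)
  have hx := Ico_subset_Icc_self hx
  rw [norm_eq_abs, abs_mul, abs_mul, abs_of_nonneg (hq x hx), mul_comm B]
  calc q x * |u x| * |sin (ν * (x - a))| ≤ q x * |u x| * 1 := by
        gcongr
        · exact mul_nonneg (hq x hx) (abs_nonneg _)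
        · exact abs_sin_le_one _
    _ ≤ q x * B := by rw [mul_one]; exact mul_le_mul_of_nonneg_left (hB x hx) (hq x hx)

theorem abs_mul_mul_sqrt_le_of_mul_eq_zero {U V c s : ℝ} (hUV : U * V = 0) (hc : c ^ 2 ≤ 1)
    (hs : s ^ 2 ≤ 1) : |s * c| * √(U ^ 2 + V ^ 2) ≤ |U * c - V * s| := by
  refine abs_le_of_sq_le_sq ?_ (abs_nonneg _) |>.trans' (le_abs_self _)
  rw [mul_pow, sq_abs, sq_abs, sq_sqrt (by positivity)]
  calc (s * c) ^ 2 * (U ^ 2 + V ^ 2) = (U * c) ^ 2 * s ^ 2 + (V * s) ^ 2 * c ^ 2 := by ring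
    _ ≤ (U * c) ^ 2 * 1 + (V * s) ^ 2 * 1 := by gcongr
    _ = (U * c - V * s) ^ 2 := by linear_combination 2 * c * s * hUV

theorem hasDerivAt_inv_four_mul_sin_sq {θ : ℝ} (h : sin θ ≠ 0) :
    HasDerivAt (fun θ ↦ 1 / (4 * sin θ ^ 2)) (-(cos θ / (2 * sin θ ^ 3))) θ := by
  refine ((hasDerivAt_const θ (1 : ℝ)).div (((hasDerivAt_sin θ).pow 2).const_mul 4)
    (mul_ne_zero four_ne_zero (pow_ne_zero 2 h))).congr_deriv ?_
  simp only [Pi.pow_apply]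
  field_simp
  ring

theorem hasDerivAt_neg_cos_div_four_mul_sin {θ : ℝ} (h : sin θ ≠ 0) :
    HasDerivAt (fun θ ↦ -(cos θ / (4 * sin θ))) (1 / (4 * sin θ ^ 2)) θ := by
  refine (((hasDerivAt_cos θ).div ((hasDerivAt_sin θ).const_mul 4)
    (mul_ne_zero four_ne_zero h)).neg).congr_deriv ?_
  field_simp
  linear_combination sin_sq_add_cos_sq θ

variable {u v : ℝ → ℝ} {ν a : ℝ}

theorem sin_pos_of_mem_Icc_pi_div_two (ha : 0 < a) {θ : ℝ} (hθ : θ ∈ Icc a (π / 2)) : 0 < sin θ :=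
  sin_pos_of_pos_of_lt_pi (ha.trans_le hθ.1) (by linarith [hθ.2, pi_pos])

theorem cos_nonneg_of_mem_Icc_pi_div_two (ha : 0 < a) {θ : ℝ} (hθ : θ ∈ Icc a (π / 2)) :
    0 ≤ cos θ :=
  cos_nonneg_of_mem_Icc ⟨by linarith [hθ.1, pi_pos], hθ.2⟩

theorem abs_mul_le_sqrt_of_normalForm (hν : 0 < ν) (ha : 0 < a)
    (hu : ∀ θ ∈ Icc a (π / 2), HasDerivAt u (v θ) θ)
    (hv : ∀ θ ∈ Icc a (π / 2), HasDerivAt v (-((ν ^ 2 + 1 / (4 * sin θ ^ 2)) * u θ)) θ)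
    {θ : ℝ} (hθ : θ ∈ Icc a (π / 2)) :
    |u θ| * ν ≤ √((ν * u (π / 2)) ^ 2 + v (π / 2) ^ 2) := by
  have hmono := monotoneOn_sq_add_sq_div hu hv
    (fun x hx ↦ (hasDerivAt_inv_four_mul_sin_sq
      (sin_pos_of_mem_Icc_pi_div_two ha hx).ne').const_add (ν ^ 2))
    (fun x _ ↦ by positivity) fun x hx ↦ neg_nonpos.2 <|
      div_nonneg (cos_nonneg_of_mem_Icc_pi_div_two ha hx)
        (mul_nonneg zero_le_two (pow_nonneg (sin_pos_of_mem_Icc_pi_div_two ha hx).le 3))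
  have hend := hmono hθ (right_mem_Icc.2 (hθ.1.trans hθ.2)) hθ.2
  simp only [sin_pi_div_two, one_pow, mul_one] at hend
  have hsq : u θ ^ 2 ≤ u (π / 2) ^ 2 + v (π / 2) ^ 2 / ν ^ 2 :=
    calc u θ ^ 2 ≤ u θ ^ 2 + v θ ^ 2 / (ν ^ 2 + 1 / (4 * sin θ ^ 2)) :=
          le_add_of_nonneg_right (by positivity)
      _ ≤ u (π / 2) ^ 2 + v (π / 2) ^ 2 / (ν ^ 2 + 1 / 4) := hend
      _ ≤ u (π / 2) ^ 2 + v (π / 2) ^ 2 / ν ^ 2 := by gcongr; linarith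
  apply le_sqrt_of_sq_le
  calc (|u θ| * ν) ^ 2 = u θ ^ 2 * ν ^ 2 := by rw [mul_pow, sq_abs]
    _ ≤ (u (π / 2) ^ 2 + v (π / 2) ^ 2 / ν ^ 2) * ν ^ 2 := by gcongr
    _ = (ν * u (π / 2)) ^ 2 + v (π / 2) ^ 2 := by field_simp

theorem abs_sin_two_mul_le_of_normalForm (hν : 0 < ν) (ha : 0 < a) (ha' : a ≤ π / 2)
    (hu : ∀ θ ∈ Icc a (π / 2), HasDerivAt u (v θ) θ)
    (hv : ∀ θ ∈ Icc a (π / 2), HasDerivAt v (-((ν ^ 2 + 1 / (4 * sin θ ^ 2)) * u θ)) θ)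
    (hmid : u (π / 2) * v (π / 2) = 0) (hne : u (π / 2) ≠ 0 ∨ v (π / 2) ≠ 0) (hzero : u a = 0) :
    |sin (2 * (ν * (π / 2 - a)))| ≤ cos a / sin a / (2 * ν) := by
  have hsin := sin_pos_of_mem_Icc_pi_div_two ha (left_mem_Icc.2 ha')
  set ψ := ν * (π / 2 - a)
  set R := √((ν * u (π / 2)) ^ 2 + v (π / 2) ^ 2)
  have hR : 0 < R := sqrt_pos.2 <| by
    rcases hne with h | h
    · have := mul_ne_zero hν.ne' h; positivity
    · positivity
  have hphase := abs_phase_le (B := R / ν) ha' hu hv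
    (fun x hx ↦ hasDerivAt_neg_cos_div_four_mul_sin (sin_pos_of_mem_Icc_pi_div_two ha hx).ne')
    (fun x _ ↦ by positivity)
    (fun x hx ↦ (le_div_iff₀ hν).2 (abs_mul_le_sqrt_of_normalForm hν ha hu hv hx)) hzero
  have hbound : |sin ψ * cos ψ| * R ≤ cos a / sin a / (4 * ν) * R :=
    calc |sin ψ * cos ψ| * R ≤ |ν * u (π / 2) * cos ψ - v (π / 2) * sin ψ| :=
          abs_mul_mul_sqrt_le_of_mul_eq_zero (by rw [mul_assoc, hmid, mul_zero])
            (cos_sq_le_one ψ) (sin_sq_le_one ψ)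
      _ ≤ R / ν * (-(cos (π / 2) / (4 * sin (π / 2))) - -(cos a / (4 * sin a))) := hphase
      _ = cos a / sin a / (4 * ν) * R := by rw [cos_pi_div_two]; field_simp; ring
  calc |sin (2 * ψ)| = 2 * |sin ψ * cos ψ| := by
        rw [sin_two_mul, mul_assoc, abs_mul, abs_two]
    _ ≤ 2 * (cos a / sin a / (4 * ν)) := by gcongr; exact le_of_mul_le_mul_right hbound hR
    _ = cos a / sin a / (2 * ν) := by ring

/-- Liouville's substitution `u = √sin · w` removes the first-order term of
`w'' = -cot · w' - lam · w`. -/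
theorem hasDerivAt_liouville {w z : ℝ → ℝ} {lam θ : ℝ} (hsin : 0 < sin θ)
    (hw : HasDerivAt w (z θ) θ) (hz : HasDerivAt z (-(cos θ / sin θ * z θ) - lam * w θ) θ) :
    HasDerivAt (fun θ ↦ √(sin θ) * w θ)
      (√(sin θ) * z θ + cos θ / (2 * √(sin θ)) * w θ) θ ∧
    HasDerivAt (fun θ ↦ √(sin θ) * z θ + cos θ / (2 * √(sin θ)) * w θ)
      (-((lam + 1 / 4 + 1 / (4 * sin θ ^ 2)) * (√(sin θ) * w θ))) θ := by
  have hroot : HasDerivAt (fun θ ↦ √(sin θ)) (cos θ / (2 * √(sin θ))) θ :=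
    (hasDerivAt_sin θ).sqrt hsin.ne'
  have hroot_pos : 0 < √(sin θ) := sqrt_pos.2 hsin
  refine ⟨(hroot.mul hw).congr_deriv (by ring), ((hroot.mul hz).add
    (((hasDerivAt_cos θ).div (hroot.const_mul 2) (by positivity)).mul hw)).congr_deriv ?_⟩
  have hsq : sin θ = √(sin θ) ^ 2 := (sq_sqrt hsin.le).symm
  have hpyth := sin_sq_add_cos_sq θ
  simp only [Pi.div_apply]
  generalize √(sin θ) = r at *
  rw [hsq] at hpyth ⊢
  field_simp
  linear_combination (-4 * w θ) * hpyth

end Oscillation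

section LegendreRoots

open Polynomial Real Set

theorem hasDerivAt_eval_cos (p : ℝ[X]) (θ : ℝ) :
    HasDerivAt (fun θ ↦ p.eval (cos θ)) (-(sin θ * (derivative p).eval (cos θ))) θ :=
  ((p.hasDerivAt (cos θ)).comp θ (hasDerivAt_cos θ)).congr_deriv (by ring)

theorem IsLegendre.eval_ode {n : ℕ} {P : ℝ[X]} (hP : IsLegendre n P) (x : ℝ) :
    (1 - x ^ 2) * (derivative (derivative P)).eval x =
      2 * x * (derivative P).eval x - n * (n + 1) * P.eval x := by
  have h := congrArg (eval x) hP.legendreOp_eq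
  simp only [legendreOp_apply, derivative_mul, derivative_sub, derivative_one, derivative_X_pow,
    eval_add, eval_sub, eval_mul, eval_smul, eval_pow, eval_X, eval_one, eval_zero, eval_C,
    smul_eq_mul] at h
  norm_num at h
  linear_combination h

theorem IsLegendre.hasDerivAt_sin_mul_eval_cos {n : ℕ} {P : ℝ[X]} (hP : IsLegendre n P) {θ : ℝ}
    (h : sin θ ≠ 0) :
    HasDerivAt (fun θ ↦ -(sin θ * (derivative P).eval (cos θ)))
      (-(cos θ / sin θ * -(sin θ * (derivative P).eval (cos θ))) -
        n * (n + 1) * P.eval (cos θ)) θ := by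
  refine ((hasDerivAt_sin θ).mul (hasDerivAt_eval_cos (derivative P) θ)).neg.congr_deriv ?_
  have hode := hP.eval_ode (cos θ)
  rw [← sin_sq] at hode
  field_simp
  linear_combination hode

theorem IsLegendre.eval_zero_mul_eval_derivative_zero {n : ℕ} {P : ℝ[X]} (hP : IsLegendre n P) :
    P.eval 0 * (derivative P).eval 0 = 0 := by
  simpa [← coeff_zero_eq_eval_zero, coeff_derivative] using hP.coeff_zero_mul_coeff_one

theorem IsLegendre.eval_zero_ne_zero_or {n : ℕ} {P : ℝ[X]} (hP : IsLegendre n P) :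
    P.eval 0 ≠ 0 ∨ (derivative P).eval 0 ≠ 0 := by
  simpa [← coeff_zero_eq_eval_zero, coeff_derivative] using hP.coeff_zero_ne_zero_or

theorem abs_sin_two_mul_phase (n : ℕ) (a : ℝ) :
    |sin (2 * ((n + 1 / 2) * (π / 2 - a)))| = |cos ((2 * n + 1) * a)| := by
  rw [show 2 * ((n + 1 / 2) * (π / 2 - a)) = π / 2 - (2 * n + 1) * a + n * π by ring,
    sin_add_nat_mul_pi, sin_pi_div_two_sub, abs_mul, abs_pow, abs_neg, abs_one, one_pow, one_mul]

theorem IsLegendre.sin_mul_abs_cos_le {n : ℕ} {P : ℝ[X]} (hP : IsLegendre n P) {a : ℝ}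
    (ha : 0 < a) (ha' : a ≤ π / 2) (hroot : P.eval (cos a) = 0) :
    sin a * |cos ((2 * n + 1) * a)| ≤ 1 / (2 * n + 1) := by
  have hsin : ∀ θ ∈ Icc a (π / 2), 0 < sin θ := fun θ ↦ sin_pos_of_mem_Icc_pi_div_two ha
  have hsin_a := hsin a (left_mem_Icc.2 ha')
  have hliouville := fun θ hθ ↦ hasDerivAt_liouville
    (w := fun θ ↦ P.eval (cos θ)) (z := fun θ ↦ -(sin θ * (derivative P).eval (cos θ)))
    (hsin θ hθ) (hasDerivAt_eval_cos P θ) (hP.hasDerivAt_sin_mul_eval_cos (hsin θ hθ).ne')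
  have hfreq : (n * (n + 1) + 1 / 4 : ℝ) = (n + 1 / 2) ^ 2 := by ring
  have hphase := abs_sin_two_mul_le_of_normalForm (ν := n + 1 / 2) (by positivity) ha ha'
    (fun θ hθ ↦ (hliouville θ hθ).1) (fun θ hθ ↦ hfreq ▸ (hliouville θ hθ).2)
    (by simpa using hP.eval_zero_mul_eval_derivative_zero)
    (by simpa using hP.eval_zero_ne_zero_or) (by simp [hroot])
  rw [abs_sin_two_mul_phase] at hphase
  calc sin a * |cos ((2 * n + 1) * a)| ≤ sin a * (cos a / sin a / (2 * (n + 1 / 2))) := by gcongr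
    _ = cos a / (2 * n + 1) := by field_simp
    _ ≤ 1 / (2 * n + 1) := by gcongr; exact cos_le_one a

theorem sq_eval_T_neg (k : ℤ) (x : ℝ) :
    (Chebyshev.T ℝ k).eval (-x) ^ 2 = (Chebyshev.T ℝ k).eval x ^ 2 := by
  rw [Chebyshev.T_eval_neg, mul_pow]
  rcases Int.even_or_odd k with h | h <;> simp [Int.negOnePow_even, Int.negOnePow_odd, h]

theorem IsLegendre.sq_eval_T_le {n : ℕ} {P : ℝ[X]} (hP : IsLegendre n P) {x : ℝ}
    (hx : x ∈ Icc (-1) 1) (hroot : P.eval x = 0) :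
    (1 - x ^ 2) * (Chebyshev.T ℝ (2 * n + 1)).eval x ^ 2 ≤ 1 / (2 * n + 1) ^ 2 := by
  wlog h0 : 0 ≤ x generalizing x
  · have hroot' : P.eval (-x) = 0 := by
      simpa [eval_comp, hroot] using congrArg (eval x) hP.comp_neg_X
    simpa [sq_eval_T_neg] using this ⟨by linarith [hx.2], by linarith [hx.1]⟩ hroot' (by linarith)
  obtain rfl | hx1 := hx.2.eq_or_lt
  · simpa using by positivity
  obtain ⟨a, ha, ha', rfl⟩ : ∃ a, 0 < a ∧ a ≤ π / 2 ∧ cos a = x :=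
    ⟨arccos x, arccos_pos.2 hx1, arccos_le_pi_div_two.2 h0, cos_arccos hx.1 hx.2⟩
  have hsin := sin_pos_of_mem_Icc_pi_div_two ha (left_mem_Icc.2 ha')
  have h := pow_le_pow_left₀ (mul_nonneg hsin.le (abs_nonneg _))
    (hP.sin_mul_abs_cos_le ha ha' hroot) 2
  rw [mul_pow, sq_abs, div_pow, one_pow] at h
  simpa [Chebyshev.T_real_cos, ← sin_sq] using h

end LegendreRoots

section ChebyshevSquares

open Polynomial Real

/-- The Christoffel–Darboux kernel `∑_{N < n} U_N²` of the Chebyshev polynomials of the second kind,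
on the diagonal. -/
noncomputable def sumSqU (n : ℕ) : ℝ[X] :=
  ∑ N ∈ Finset.range n, Chebyshev.U ℝ N ^ 2

theorem eval_sumSqU (n : ℕ) (x : ℝ) :
    (sumSqU n).eval x = ∑ N ∈ Finset.range n, (Chebyshev.U ℝ N).eval x ^ 2 := by
  simp only [sumSqU, eval_finsetSum, eval_pow]

theorem natDegree_sumSqU_le (n : ℕ) : (sumSqU n).natDegree ≤ 2 * n - 1 :=
  natDegree_sum_le_of_forall_le _ _ fun N hN ↦ by
    rw [natDegree_pow, Chebyshev.natDegree_U_natCast]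
    have := Finset.mem_range.1 hN
    lia

theorem eval_sumSqU_neg (n : ℕ) (x : ℝ) : (sumSqU n).eval (-x) = (sumSqU n).eval x := by
  simp only [eval_sumSqU]
  refine Finset.sum_congr rfl fun N _ ↦ ?_
  rw [Chebyshev.U_eval_neg, mul_pow]
  rcases Int.even_or_odd (N : ℤ) with h | h <;> simp [Int.negOnePow_even, Int.negOnePow_odd, h]

theorem sin_sq_mul_eval_sumSqU (n : ℕ) (θ : ℝ) :
    sin θ ^ 2 * (sumSqU n).eval (cos θ) = ∑ N ∈ Finset.range n, sin ((N + 1) * θ) ^ 2 := by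
  rw [eval_sumSqU, Finset.mul_sum]
  refine Finset.sum_congr rfl fun N _ ↦ ?_
  rw [mul_comm, ← mul_pow, Chebyshev.U_real_cos, Int.cast_natCast]

theorem four_mul_sin_mul_sum_sin_sq (n : ℕ) (θ : ℝ) :
    4 * sin θ * ∑ N ∈ Finset.range n, sin ((N + 1) * θ) ^ 2 =
      (2 * n + 1) * sin θ - sin ((2 * n + 1) * θ) := by
  induction n with
  | zero => simp
  | succ n ih =>
    rw [Finset.sum_range_succ, mul_add, ih]
    push_cast
    rw [show (2 * (n : ℝ) + 1) * θ = 2 * ((n + 1) * θ) - θ by ring,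
      show (2 * ((n : ℝ) + 1) + 1) * θ = 2 * ((n + 1) * θ) + θ by ring, sin_add, sin_sub,
      cos_two_mul]
    linear_combination 4 * sin θ * sin_sq_add_cos_sq ((n + 1) * θ)

theorem div_four_le_sin_sq_mul_eval_sumSqU {n : ℕ} {θ : ℝ} (h : 1 ≤ n * sin θ) :
    n / 4 ≤ sin θ ^ 2 * (sumSqU n).eval (cos θ) := by
  have hsin : 0 < sin θ := pos_of_mul_pos_right (zero_lt_one.trans_le h) n.cast_nonneg
  have hsum := four_mul_sin_mul_sum_sin_sq n θ
  rw [← sin_sq_mul_eval_sumSqU] at hsum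
  refine le_of_mul_le_mul_left ?_ hsin
  linarith [sin_le_one ((2 * n + 1) * θ)]

theorem two_div_pi_mul_le_eval_U {N : ℕ} {θ : ℝ} (h0 : 0 ≤ θ) (h1 : (N + 1) * θ ≤ π / 2) :
    2 / π * (N + 1) ≤ (Chebyshev.U ℝ N).eval (cos θ) := by
  obtain rfl | hpos := h0.eq_or_lt
  · rw [cos_zero, Chebyshev.U_eval_one, Int.cast_natCast]
    exact mul_le_of_le_one_left (by positivity) ((div_le_one pi_pos).2 two_le_pi)
  · have hθ : θ ≤ (N + 1) * θ := le_mul_of_one_le_left h0 (by linarith [N.cast_nonneg (α := ℝ)])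
    have hsin : 0 < sin θ := sin_pos_of_pos_of_lt_pi hpos (by linarith [pi_pos])
    refine le_of_mul_le_mul_right ?_ hsin
    calc 2 / π * (N + 1) * sin θ ≤ 2 / π * ((N + 1) * θ) := by
          rw [mul_assoc]; gcongr; exact sin_le h0
      _ ≤ sin ((N + 1) * θ) := mul_le_sin (by positivity) h1
      _ = (Chebyshev.U ℝ N).eval (cos θ) * sin θ := by
          rw [Chebyshev.U_real_cos, Int.cast_natCast]

theorem pow_three_div_three_le_sum_sq (n : ℕ) :
    (n : ℝ) ^ 3 / 3 ≤ ∑ N ∈ Finset.range n, ((N : ℝ) + 1) ^ 2 := by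
  induction n with
  | zero => simp
  | succ n ih =>
    rw [Finset.sum_range_succ]
    push_cast
    nlinarith [n.cast_nonneg (α := ℝ)]

theorem pow_three_div_eight_le_eval_sumSqU {n : ℕ} {θ : ℝ} (h0 : 0 ≤ θ) (h1 : n * θ ≤ π / 2) :
    (n : ℝ) ^ 3 / 8 ≤ (sumSqU n).eval (cos θ) := by
  calc (n : ℝ) ^ 3 / 8 ≤ (2 / π) ^ 2 * (n ^ 3 / 3) := by
        have hpi : π ^ 2 * 3 ≤ 32 := by nlinarith [pi_lt_d2, pi_pos]
        rw [div_pow, div_mul_div_comm, div_le_div_iff₀ (by norm_num) (by positivity)]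
        nlinarith [pow_nonneg (n.cast_nonneg (α := ℝ)) 3]
    _ ≤ (2 / π) ^ 2 * ∑ N ∈ Finset.range n, ((N : ℝ) + 1) ^ 2 := by
        gcongr; exact pow_three_div_three_le_sum_sq n
    _ = ∑ N ∈ Finset.range n, (2 / π * ((N : ℝ) + 1)) ^ 2 := by simp only [Finset.mul_sum, mul_pow]
    _ ≤ ∑ N ∈ Finset.range n, (Chebyshev.U ℝ N).eval (cos θ) ^ 2 := by
        refine Finset.sum_le_sum fun N hN ↦ pow_le_pow_left₀ (by positivity)
          (two_div_pi_mul_le_eval_U h0 (le_trans ?_ h1)) 2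
        gcongr
        exact_mod_cast Finset.mem_range.1 hN
    _ = (sumSqU n).eval (cos θ) := (eval_sumSqU n _).symm

theorem sq_le_mul_eval_sumSqU {n : ℕ} (hn : 0 < n) {x c : ℝ} (hx : x ∈ Set.Icc (-1) 1)
    (hc : c ^ 2 ≤ 1) (hxc : (1 - x ^ 2) * c ^ 2 ≤ 1 / n ^ 2) :
    c ^ 2 ≤ 8 / n ^ 3 * (sumSqU n).eval x := by
  wlog h0 : 0 ≤ x generalizing x
  · simpa [eval_sumSqU_neg] using
      this (x := -x) ⟨by linarith [hx.2], by linarith [hx.1]⟩ (by simpa using hxc) (by linarith)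
  obtain ⟨θ, hθ, hθ', rfl⟩ : ∃ θ, 0 ≤ θ ∧ θ ≤ π / 2 ∧ cos θ = x :=
    ⟨arccos x, arccos_nonneg x, arccos_le_pi_div_two.2 h0, cos_arccos hx.1 hx.2⟩
  have hn' : (0 : ℝ) < n := by exact_mod_cast hn
  rw [← sin_sq] at hxc
  rw [div_mul_eq_mul_div, le_div_iff₀ (by positivity)]
  rcases le_total 1 (n * sin θ) with h | h
  · have hsin : 0 < sin θ := pos_of_mul_pos_right (zero_lt_one.trans_le h) hn'.le
    rw [le_div_iff₀ (by positivity)] at hxc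
    refine le_of_mul_le_mul_left ?_ (pow_pos hsin 2)
    calc sin θ ^ 2 * (c ^ 2 * n ^ 3) = sin θ ^ 2 * c ^ 2 * n ^ 2 * (n : ℝ) := by ring
      _ ≤ 1 * (n : ℝ) := by gcongr
      _ ≤ 8 * ((n : ℝ) / 4) := by linarith
      _ ≤ 8 * (sin θ ^ 2 * (sumSqU n).eval (cos θ)) := by
          gcongr; exact div_four_le_sin_sq_mul_eval_sumSqU h
      _ = sin θ ^ 2 * (8 * (sumSqU n).eval (cos θ)) := by ring
  · have hnθ : n * θ ≤ π / 2 := by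
      have := (mul_le_mul_of_nonneg_left (mul_le_sin hθ hθ') hn'.le).trans h
      rw [show n * (2 / π * θ) = n * θ * 2 / π by ring, div_le_one pi_pos] at this
      linarith
    calc c ^ 2 * n ^ 3 ≤ 1 * n ^ 3 := by gcongr
      _ ≤ 8 * (sumSqU n).eval (cos θ) := by
          linarith [pow_three_div_eight_le_eval_sumSqU hθ hnθ]

theorem chebyshev_U_double (R : Type*) [CommRing R] (N : ℕ) :
    Chebyshev.U R (2 * N + 1) =
      Chebyshev.U R N * (Chebyshev.U R (N + 1) - Chebyshev.U R (N - 1)) ∧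
    Chebyshev.U R (2 * N + 2) = Chebyshev.U R (N + 1) ^ 2 - Chebyshev.U R N ^ 2 := by
  induction N with
  | zero => constructor <;> simp [Chebyshev.U_two]; ring
  | succ N ih =>
    obtain ⟨hodd, heven⟩ := ih
    have hrec := Chebyshev.U_add_one R N
    have h3 : Chebyshev.U R (2 * (N + 1 : ℕ) + 1) =
        Chebyshev.U R (N + 1) * (Chebyshev.U R (N + 2) - Chebyshev.U R N) := by
      rw [show (2 * (N + 1 : ℕ) + 1 : ℤ) = 2 * N + 1 + 2 by push_cast; ring, Chebyshev.U_add_two,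
        Chebyshev.U_add_two, add_assoc, one_add_one_eq_two, heven, hodd]
      linear_combination Chebyshev.U R N * hrec
    have h4 : Chebyshev.U R (2 * (N + 1 : ℕ) + 2) =
        Chebyshev.U R (N + 2) ^ 2 - Chebyshev.U R (N + 1) ^ 2 := by
      rw [Chebyshev.U_add_two, h3, show (2 * (N + 1 : ℕ) : ℤ) = 2 * N + 2 by push_cast; ring, heven,
        Chebyshev.U_add_two]
      ring
    push_cast at *
    exact ⟨by simpa [add_assoc] using h3, by simpa [add_assoc] using h4⟩

theorem chebyshev_U_sq (R : Type*) [CommRing R] (N : ℕ) :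
    Chebyshev.U R N ^ 2 = ∑ j ∈ Finset.range (N + 1), Chebyshev.U R (2 * j) := by
  induction N with
  | zero => simp
  | succ N ih =>
    rw [Finset.sum_range_succ, ← ih]
    push_cast
    rw [mul_add, mul_one, (chebyshev_U_double R N).2]
    ring

theorem polyIntegral_U_two_mul (j : ℕ) :
    polyIntegral (Chebyshev.U ℝ (2 * j)) = 2 / (2 * j + 1) := by
  have h := polyIntegral_derivative (Chebyshev.T ℝ (2 * j + 1))
  rw [Chebyshev.T_derivative_eq_U, add_sub_cancel_right, ← zsmul_eq_mul, map_zsmul, zsmul_eq_mul,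
    Chebyshev.T_eval_one, Chebyshev.T_eval_neg_one, Int.negOnePow_two_mul_add_one] at h
  push_cast at h
  rw [eq_div_iff (by positivity), mul_comm, h]
  norm_num

theorem polyIntegral_U_sq_le {N n : ℕ} (h : N < n) :
    polyIntegral (Chebyshev.U ℝ N ^ 2) ≤ 2 * (1 + log n) := by
  rw [chebyshev_U_sq, map_sum]
  calc ∑ j ∈ Finset.range (N + 1), polyIntegral (Chebyshev.U ℝ (2 * j))
      ≤ ∑ j ∈ Finset.range (N + 1), 2 * ((j : ℝ) + 1)⁻¹ := by
        refine Finset.sum_le_sum fun j _ ↦ ?_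
        rw [polyIntegral_U_two_mul, div_eq_mul_inv]
        gcongr
        linarith [j.cast_nonneg (α := ℝ)]
    _ ≤ ∑ j ∈ Finset.range n, 2 * ((j : ℝ) + 1)⁻¹ :=
        Finset.sum_le_sum_of_subset_of_nonneg (Finset.range_mono h) fun j _ _ ↦ by positivity
    _ = 2 * (harmonic n : ℝ) := by simp [harmonic, Finset.mul_sum]
    _ ≤ 2 * (1 + log n) := by gcongr; exact harmonic_le_one_add_log n

theorem polyIntegral_sumSqU_le (n : ℕ) : polyIntegral (sumSqU n) ≤ n * (2 * (1 + log n)) := by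
  rw [sumSqU, map_sum]
  refine (Finset.sum_le_card_nsmul _ _ _ fun N hN ↦
    polyIntegral_U_sq_le (Finset.mem_range.1 hN)).trans_eq ?_
  rw [Finset.card_range, nsmul_eq_mul]

end ChebyshevSquares

section Quadrature

open Polynomial Real

/-- The quadrature rule with nodes `x` and weights `w` is the `n`-point Gauss–Legendre rule on
`[-1, 1]`. -/
structure IsGaussRule {n : ℕ} (x w : Fin n → ℝ) : Prop where
  mem_Icc : ∀ k, x k ∈ Set.Icc (-1) 1
  weight_pos : ∀ k, 0 < w k
  exact : ∀ p : ℝ[X], p.natDegree ≤ 2 * n - 1 → ∑ k, w k * p.eval (x k) = polyIntegral p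

/-- The error on `g` of the quadrature rule on `[-1, 1]` with nodes `x` and weights `w`. -/
noncomputable def quadError {n : ℕ} (x w : Fin n → ℝ) (g : ℝ → ℝ) : ℝ :=
  (∫ t in (-1 : ℝ)..1, g t) - ∑ k, w k * g (x k)

/-- How far the nodes `x` are, on weighted average, from being roots of `T_{2n+1}`; it measures how
far frequencies differing by `4n + 2` are from being aliased. -/
noncomputable def aliasingDefect {n : ℕ} (x w : Fin n → ℝ) : ℝ :=
  ∑ k, w k * |(Chebyshev.T ℝ (2 * n + 1)).eval (x k)|

theorem abs_integral_le_two_mul {g : ℝ → ℝ} {B : ℝ} (hg : ∀ t ∈ Set.Icc (-1) 1, |g t| ≤ B) :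
    |∫ t in (-1 : ℝ)..1, g t| ≤ 2 * B := by
  have := intervalIntegral.norm_integral_le_of_norm_le_const (a := (-1 : ℝ)) (b := 1) (f := g)
    (C := B) fun t ht ↦ hg t (Set.Ioc_subset_Icc_self <| by
      rwa [Set.uIoc_of_le (by norm_num)] at ht)
  rw [norm_eq_abs] at this
  norm_num at this
  linarith

namespace IsGaussRule

variable {n : ℕ} {x w : Fin n → ℝ}

theorem sum_weight (h : IsGaussRule x w) : ∑ k, w k = 2 := by
  have := h.exact 1 (by simp)
  norm_num [polyIntegral_apply] at this
  exact this

theorem size_pos (h : IsGaussRule x w) : 0 < n := by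
  rcases n.eq_zero_or_pos with rfl | hn
  · simpa using h.sum_weight
  · exact hn

theorem isLegendre_nodal (h : IsGaussRule x w) :
    IsLegendre n (Lagrange.nodal Finset.univ x) where
  degree_eq := by simp [Lagrange.degree_nodal]
  orthogonal q hq := by
    have hq' : q.natDegree < n := by
      rcases eq_or_ne q 0 with rfl | hq0
      · simpa using h.size_pos
      · exact (natDegree_lt_iff_degree_lt hq0).2 hq
    rw [← h.exact _ (natDegree_mul_le.trans (by simp [Lagrange.natDegree_nodal]; lia))]
    simp [Lagrange.eval_nodal_at_node]

theorem sq_eval_T_le (h : IsGaussRule x w) (k : Fin n) :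
    (Chebyshev.T ℝ (2 * n + 1)).eval (x k) ^ 2 ≤ 8 / n ^ 3 * (sumSqU n).eval (x k) := by
  have hn : (0 : ℝ) < n := by exact_mod_cast h.size_pos
  refine sq_le_mul_eval_sumSqU h.size_pos (h.mem_Icc k)
    ((sq_le_one_iff_abs_le_one _).2 <| Chebyshev.abs_eval_T_real_le_one _ (abs_le.2 (h.mem_Icc k)))
    ((h.isLegendre_nodal.sq_eval_T_le (h.mem_Icc k)
      (Lagrange.eval_nodal_at_node (Finset.mem_univ k))).trans ?_)
  gcongr
  linarith

theorem sum_weight_mul_sq_eval_T_le (h : IsGaussRule x w) :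
    ∑ k, w k * (Chebyshev.T ℝ (2 * n + 1)).eval (x k) ^ 2 ≤ 16 * (1 + log n) / n ^ 2 := by
  have hn : (0 : ℝ) < n := by exact_mod_cast h.size_pos
  calc ∑ k, w k * (Chebyshev.T ℝ (2 * n + 1)).eval (x k) ^ 2
      ≤ ∑ k, w k * (8 / n ^ 3 * (sumSqU n).eval (x k)) :=
        Finset.sum_le_sum fun k _ ↦ mul_le_mul_of_nonneg_left (h.sq_eval_T_le k) (h.weight_pos k).le
    _ = 8 / n ^ 3 * polyIntegral (sumSqU n) := by
        rw [← h.exact _ (natDegree_sumSqU_le n), Finset.mul_sum]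
        exact Finset.sum_congr rfl fun k _ ↦ by ring
    _ ≤ 8 / n ^ 3 * (n * (2 * (1 + log n))) := by gcongr; exact polyIntegral_sumSqU_le n
    _ = 16 * (1 + log n) / n ^ 2 := by field_simp; norm_num

theorem aliasingDefect_nonneg (h : IsGaussRule x w) : 0 ≤ aliasingDefect x w :=
  Finset.sum_nonneg fun k _ ↦ mul_nonneg (h.weight_pos k).le (abs_nonneg _)

theorem sq_aliasingDefect_le (h : IsGaussRule x w) :
    aliasingDefect x w ^ 2 ≤ 32 * (1 + log n) / n ^ 2 := by
  calc aliasingDefect x w ^ 2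
      ≤ (∑ k, w k) * ∑ k, w k * (Chebyshev.T ℝ (2 * n + 1)).eval (x k) ^ 2 :=
        Finset.sum_sq_le_sum_mul_sum_of_sq_le_mul _ (fun k _ ↦ (h.weight_pos k).le)
          (fun k _ ↦ mul_nonneg (h.weight_pos k).le (sq_nonneg _))
          fun k _ ↦ (by rw [mul_pow, sq_abs]; ring : _ = _).le
    _ ≤ 2 * (16 * (1 + log n) / n ^ 2) := by
        rw [h.sum_weight]; gcongr; exact h.sum_weight_mul_sq_eval_T_le
    _ = 32 * (1 + log n) / n ^ 2 := by ring

theorem quadError_eq_zero (h : IsGaussRule x w) {p : ℝ[X]} (hp : p.natDegree ≤ 2 * n - 1) :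
    quadError x w (fun t ↦ p.eval t) = 0 :=
  sub_eq_zero.2 (h.exact p hp).symm

theorem abs_quadError_le (h : IsGaussRule x w) {g : ℝ → ℝ} {B : ℝ}
    (hg : ∀ t ∈ Set.Icc (-1) 1, |g t| ≤ B) : |quadError x w g| ≤ 4 * B := by
  have hquad : |∑ k, w k * g (x k)| ≤ 2 * B := by
    refine (Finset.abs_sum_le_sum_abs _ _).trans ?_
    rw [← h.sum_weight, Finset.sum_mul]
    refine Finset.sum_le_sum fun k _ ↦ ?_
    rw [abs_mul, abs_of_pos (h.weight_pos k)]
    exact mul_le_mul_of_nonneg_left (hg _ (h.mem_Icc k)) (h.weight_pos k).le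
  exact (abs_sub _ _).trans (by linarith [abs_integral_le_two_mul hg])

theorem abs_quadError_T_le_four (h : IsGaussRule x w) (N : ℤ) :
    |quadError x w fun t ↦ (Chebyshev.T ℝ N).eval t| ≤ 4 := by
  simpa using h.abs_quadError_le fun t ht ↦ Chebyshev.abs_eval_T_real_le_one N (abs_le.2 ht)

end IsGaussRule

end Quadrature

section Aliasing

open Polynomial Real

theorem abs_eval_T_add_sub_le (M r : ℤ) (j : ℕ) {x : ℝ} (hx : |x| ≤ 1) :
    |(Chebyshev.T ℝ (r + j * (2 * M))).eval x - (-1) ^ j * (Chebyshev.T ℝ r).eval x| ≤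
      2 * j * |(Chebyshev.T ℝ M).eval x| := by
  induction j with
  | zero => simp
  | succ j ih =>
    have hprod := congrArg (eval x) (Chebyshev.T_mul_T ℝ (r + j * (2 * M) + M) M)
    rw [eval_mul, eval_mul, eval_add, eval_ofNat, add_sub_cancel_right,
      show r + j * (2 * M) + M + M = r + (j + 1 : ℕ) * (2 * M) by push_cast; ring] at hprod
    have hmid := mul_le_mul_of_nonneg_right (Chebyshev.abs_eval_T_real_le_one
      (r + j * (2 * M) + M) hx) (abs_nonneg (eval x (Chebyshev.T ℝ M)))
    rw [← abs_mul] at hmid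
    calc |(Chebyshev.T ℝ (r + (j + 1 : ℕ) * (2 * M))).eval x -
          (-1) ^ (j + 1) * (Chebyshev.T ℝ r).eval x|
        = |2 * ((Chebyshev.T ℝ (r + j * (2 * M) + M)).eval x * (Chebyshev.T ℝ M).eval x) -
          ((Chebyshev.T ℝ (r + j * (2 * M))).eval x - (-1) ^ j * (Chebyshev.T ℝ r).eval x)| := by
          congr 1
          linear_combination -hprod
      _ ≤ 2 * (1 * |(Chebyshev.T ℝ M).eval x|) + 2 * j * |(Chebyshev.T ℝ M).eval x| := by
          refine (abs_sub _ _).trans (add_le_add ?_ ih)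
          rw [abs_mul, abs_two]
          gcongr
      _ = 2 * (j + 1 : ℕ) * |(Chebyshev.T ℝ M).eval x| := by push_cast; ring

theorem sq_sub_one_mul_polyIntegral_T (N : ℤ) :
    ((N : ℝ) ^ 2 - 1) * polyIntegral (Chebyshev.T ℝ N) = -(1 + ((N.negOnePow : ℤ) : ℝ)) := by
  have hderiv : derivative (C (N - 1 : ℝ) * Chebyshev.T ℝ (N + 1) -
      C (N + 1 : ℝ) * Chebyshev.T ℝ (N - 1)) = C (2 * ((N : ℝ) ^ 2 - 1)) * Chebyshev.T ℝ N := by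
    have hU := Chebyshev.two_mul_T_eq_U_sub_U ℝ (N - 2)
    rw [sub_add_cancel] at hU
    simp only [derivative_sub, derivative_C_mul, Chebyshev.T_derivative_eq_U]
    rw [add_sub_cancel_right, show N - 1 - 1 = N - 2 by ring]
    simp only [map_sub, map_add, map_mul, map_pow, map_one, C_ofNat, Int.cast_add, Int.cast_sub,
      Int.cast_one, map_intCast]
    linear_combination -((N : ℝ[X]) ^ 2 - 1) * hU
  have hint := polyIntegral_derivative (C (N - 1 : ℝ) * Chebyshev.T ℝ (N + 1) -
      C (N + 1 : ℝ) * Chebyshev.T ℝ (N - 1))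
  rw [hderiv, ← smul_eq_C_mul, map_smul, smul_eq_mul] at hint
  simp only [eval_sub, eval_mul, eval_C, Chebyshev.T_eval_one, Chebyshev.T_eval_neg_one,
    Int.negOnePow_succ, Int.negOnePow_sub, Int.negOnePow_one] at hint
  push_cast at hint
  linarith

/-- The Lorentzian `1 / (1 + z ^ 2)` on the integers, which dominates the integrals of the `T_z`. -/
noncomputable def lorentzian (z : ℤ) : ℝ :=
  (1 + (z : ℝ) ^ 2)⁻¹

theorem lorentzian_nonneg (z : ℤ) : 0 ≤ lorentzian z := by
  unfold lorentzian; positivity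

theorem lorentzian_anti {y z : ℤ} (h : |y| ≤ |z|) : lorentzian z ≤ lorentzian y := by
  have : (y : ℝ) ^ 2 ≤ (z : ℝ) ^ 2 := by exact_mod_cast sq_le_sq.2 h
  unfold lorentzian
  gcongr

theorem summable_lorentzian : Summable lorentzian := by
  have hsq : Summable fun z : ℤ ↦ ((z : ℝ) ^ 2)⁻¹ := by
    simpa using Real.summable_one_div_int_pow.2 one_lt_two
  refine hsq.of_norm_bounded_eventually ?_
  filter_upwards [(Set.finite_singleton (0 : ℤ)).compl_mem_cofinite] with z hz
  have : (z : ℝ) ≠ 0 := by exact_mod_cast hz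
  rw [norm_of_nonneg (lorentzian_nonneg z), lorentzian]
  gcongr
  linarith

theorem sum_range_lorentzian_le (K : ℕ) (c : ℤ) :
    ∑ i ∈ Finset.range K, lorentzian (i + c) ≤ ∑' z, lorentzian z := by
  have hinj : Set.InjOn (fun i : ℕ ↦ (i : ℤ) + c) (Finset.range K) := fun a _ b _ h ↦ by
    simpa using h
  rw [← Finset.sum_image (f := lorentzian) hinj]
  exact summable_lorentzian.sum_le_tsum _ fun z _ ↦ lorentzian_nonneg z

theorem abs_polyIntegral_T_le (N : ℤ) :
    |polyIntegral (Chebyshev.T ℝ N)| ≤ 6 * lorentzian N := by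
  have htrivial : |∫ t in (-1 : ℝ)..1, (Chebyshev.T ℝ N).eval t| ≤ 2 * 1 :=
    abs_integral_le_two_mul fun t ht ↦ Chebyshev.abs_eval_T_real_le_one N (abs_le.2 ht)
  have hdecay : ((N : ℝ) ^ 2 - 1) * |polyIntegral (Chebyshev.T ℝ N)| ≤ 2 := by
    have hsign : |((N.negOnePow : ℤ) : ℝ)| = 1 := by exact_mod_cast Int.abs_negOnePow N
    refine (mul_le_mul_of_nonneg_right (le_abs_self _) (abs_nonneg _)).trans ?_
    rw [← abs_mul, sq_sub_one_mul_polyIntegral_T, abs_neg]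
    exact (abs_add_le _ _).trans (by rw [hsign, abs_one]; norm_num)
  rw [← polyIntegral_apply] at htrivial
  rw [lorentzian, ← div_eq_mul_inv, le_div_iff₀ (by positivity)]
  linarith

theorem le_add_four_mul_rpow {e R y t : ℝ} (he : e ≤ 4) (heR : e ≤ R + 2 * y) (hR : 0 ≤ R)
    (hy : 0 ≤ y) (ht0 : 0 ≤ t) (ht1 : t ≤ 1) : e ≤ R + 4 * y ^ t := by
  rcases le_total y 1 with hy1 | hy1
  · linarith [self_le_rpow_of_le_one hy hy1 ht1]
  · linarith [one_le_rpow hy1 ht0]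

namespace IsGaussRule

variable {n : ℕ} {x w : Fin n → ℝ}

theorem abs_sum_weight_mul_eval_T_sub_le (h : IsGaussRule x w) (r : ℤ) (j : ℕ) :
    |∑ k, w k * (Chebyshev.T ℝ (r + j * (4 * n + 2))).eval (x k) -
      (-1) ^ j * ∑ k, w k * (Chebyshev.T ℝ r).eval (x k)| ≤ 2 * (j * aliasingDefect x w) := by
  rw [Finset.mul_sum, ← Finset.sum_sub_distrib, aliasingDefect, Finset.mul_sum, Finset.mul_sum]
  refine (Finset.abs_sum_le_sum_abs _ _).trans (Finset.sum_le_sum fun k _ ↦ ?_)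
  have halias := abs_eval_T_add_sub_le (2 * n + 1) r j (abs_le.2 (h.mem_Icc k))
  rw [show (2 : ℤ) * (2 * n + 1) = 4 * n + 2 by ring] at halias
  calc |w k * (Chebyshev.T ℝ (r + j * (4 * n + 2))).eval (x k) -
        (-1) ^ j * (w k * (Chebyshev.T ℝ r).eval (x k))|
      = w k * |(Chebyshev.T ℝ (r + j * (4 * n + 2))).eval (x k) -
          (-1) ^ j * (Chebyshev.T ℝ r).eval (x k)| := by
        rw [← abs_of_pos (h.weight_pos k), ← abs_mul, abs_of_pos (h.weight_pos k)]
        ring_nf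
    _ ≤ w k * (2 * j * |(Chebyshev.T ℝ (2 * n + 1)).eval (x k)|) :=
        mul_le_mul_of_nonneg_left halias (h.weight_pos k).le
    _ = 2 * (j * (w k * |(Chebyshev.T ℝ (2 * n + 1)).eval (x k)|)) := by ring

theorem abs_quadError_T_le_of_exact (h : IsGaussRule x w) {r : ℤ} (hr : |r| ≤ 2 * n - 1) {j : ℕ}
    (hj : 1 ≤ j) :
    |quadError x w fun t ↦ (Chebyshev.T ℝ (r + j * (4 * n + 2))).eval t| ≤
      12 * lorentzian r + 2 * (j * aliasingDefect x w) := by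
  have hexact : ∑ k, w k * (Chebyshev.T ℝ r).eval (x k) = polyIntegral (Chebyshev.T ℝ r) :=
    h.exact _ (by rw [Chebyshev.natDegree_T]; rw [abs_le] at hr; lia)
  have hle : |r| ≤ |r + j * (4 * n + 2)| := by
    have : (4 * n + 2 : ℤ) ≤ j * (4 * n + 2) :=
      le_mul_of_one_le_left (by lia) (by exact_mod_cast hj)
    rw [abs_le] at hr
    exact (abs_le.2 ⟨by lia, by lia⟩ : |r| ≤ r + j * (4 * n + 2)).trans (le_abs_self _)
  have halias := h.abs_sum_weight_mul_eval_T_sub_le r j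
  have hN := (abs_polyIntegral_T_le _).trans
    (mul_le_mul_of_nonneg_left (lorentzian_anti hle) (by norm_num : (0 : ℝ) ≤ 6))
  have hI := abs_polyIntegral_T_le r
  rw [hexact] at halias
  have hsum := abs_sub_abs_le_abs_sub (∑ k, w k * (Chebyshev.T ℝ (r + j * (4 * n + 2))).eval (x k))
    ((-1) ^ j * polyIntegral (Chebyshev.T ℝ r))
  rw [abs_mul, abs_neg_one_pow, one_mul] at hsum
  rw [quadError, ← polyIntegral_apply]
  exact (abs_sub _ _).trans (by linarith)

theorem abs_quadError_T_le (h : IsGaussRule x w) {r : ℤ} (hr : -(2 * n + 2) ≤ r)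
    (hr' : r ≤ 2 * n - 1) {j : ℕ} (hj : 1 ≤ j) {t : ℝ} (ht0 : 0 ≤ t) (ht1 : t ≤ 1) :
    |quadError x w fun y ↦ (Chebyshev.T ℝ (r + j * (4 * n + 2))).eval y| ≤
      12 * lorentzian r + 20 * lorentzian (r + (2 * n + 2)) + 4 * (j * aliasingDefect x w) ^ t := by
  have hδ := mul_nonneg j.cast_nonneg h.aliasingDefect_nonneg
  have hfour := h.abs_quadError_T_le_four (r + j * (4 * n + 2))
  have hr0 := lorentzian_nonneg r
  have hr1 := lorentzian_nonneg (r + (2 * n + 2))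
  -- The rule need not integrate `T_r` exactly if `-(2n+2) ≤ r ≤ -2n`, but then the trivial bound
  -- `4` is absorbed by the second Lorentzian, which is at least `1/5`.
  rcases le_or_gt r (-(2 * n)) with hsmall | hlarge
  · have : lorentzian 2 ≤ lorentzian (r + (2 * n + 2)) :=
      lorentzian_anti (abs_le_abs_of_nonneg (by lia) (by lia))
    have htwo : lorentzian 2 = 1 / 5 := by norm_num [lorentzian]
    have := rpow_nonneg hδ t
    linarith
  · have hexact := h.abs_quadError_T_le_of_exact (abs_le.2 ⟨by lia, hr'⟩) hj
    have := le_add_four_mul_rpow hfour hexact (by positivity) hδ ht0 ht1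
    linarith

theorem sum_block_abs_quadError_T_le (h : IsGaussRule x w) (q : ℕ) {t : ℝ} (ht0 : 0 ≤ t)
    (ht1 : t ≤ 1) :
    ∑ i ∈ Finset.range (4 * n + 2),
      |quadError x w fun y ↦ (Chebyshev.T ℝ ((q * (4 * n + 2) + i + 2 * n : ℕ) : ℤ)).eval y| ≤
      32 * ∑' z, lorentzian z + 24 * n * ((q + 1 : ℕ) * aliasingDefect x w) ^ t := by
  have hterm : ∀ i ∈ Finset.range (4 * n + 2),
      |quadError x w fun y ↦ (Chebyshev.T ℝ ((q * (4 * n + 2) + i + 2 * n : ℕ) : ℤ)).eval y| ≤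
        12 * lorentzian (i + -(2 * n + 2)) + 20 * lorentzian (i + 0) +
          4 * ((q + 1 : ℕ) * aliasingDefect x w) ^ t := fun i hi ↦ by
    rw [Finset.mem_range] at hi
    have hi' := h.abs_quadError_T_le (r := i + -(2 * n + 2)) (j := q + 1) (by lia) (by lia)
      (by lia) ht0 ht1
    rwa [show (i + -(2 * n + 2) + (q + 1 : ℕ) * (4 * n + 2) : ℤ) =
        (q * (4 * n + 2) + i + 2 * n : ℕ) by push_cast; ring,
      show (i + -(2 * n + 2) + (2 * n + 2) : ℤ) = i + 0 by ring] at hi'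
  refine (Finset.sum_le_sum hterm).trans ?_
  rw [Finset.sum_add_distrib, Finset.sum_add_distrib, ← Finset.mul_sum, ← Finset.mul_sum,
    Finset.sum_const, Finset.card_range, nsmul_eq_mul]
  have hn : (1 : ℝ) ≤ n := by exact_mod_cast h.size_pos
  have hcount : ((4 * n + 2 : ℕ) : ℝ) * (4 * ((q + 1 : ℕ) * aliasingDefect x w) ^ t) ≤
      6 * n * (4 * ((q + 1 : ℕ) * aliasingDefect x w) ^ t) := by
    have := h.aliasingDefect_nonneg
    gcongr
    push_cast
    linarith
  linarith [sum_range_lorentzian_le (4 * n + 2) (-(2 * n + 2)),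
    sum_range_lorentzian_le (4 * n + 2) 0]

end IsGaussRule

end Aliasing

section ChebyshevSeries

open Polynomial Real

/-- The `m`-th cosine coefficient of the even `2π`-periodic function `g`. The Chebyshev coefficients
of `f` are those of `f ∘ cos`. -/
noncomputable def cosCoeff (g : ℝ → ℝ) (m : ℕ) : ℝ :=
  (2 / π) * ∫ θ in (0 : ℝ)..π, g θ * cos (m * θ)

theorem integral_exp_mul_of_even {g : ℝ → ℝ} (hg : Continuous g) (heven : Function.Even g)
    (b a : ℝ) :
    ∫ y in -a..a, Complex.exp (-(b * y * Complex.I)) * (g y : ℂ) =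
      ((2 * ∫ y in (0 : ℝ)..a, g y * cos (b * y) : ℝ) : ℂ) := by
  have hcont : Continuous fun y : ℝ ↦ Complex.exp (-(b * y * Complex.I)) * (g y : ℂ) := by
    fun_prop
  have hneg := intervalIntegral.integral_comp_neg (a := 0) (b := a)
    fun y : ℝ ↦ Complex.exp (-(b * y * Complex.I)) * (g y : ℂ)
  rw [neg_zero] at hneg
  rw [← intervalIntegral.integral_add_adjacent_intervals (b := 0)
    (hcont.intervalIntegrable _ _) (hcont.intervalIntegrable _ _), ← hneg,
    ← intervalIntegral.integral_add (Continuous.intervalIntegrable (by fun_prop) _ _)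
      (hcont.intervalIntegrable _ _), ← intervalIntegral.integral_const_mul,
    ← intervalIntegral.integral_ofReal]
  refine intervalIntegral.integral_congr fun y _ ↦ ?_
  simp only [heven y]
  push_cast
  rw [Complex.cos]
  ring_nf

theorem cos_natAbs_mul (n : ℤ) (y : ℝ) : cos (n.natAbs * y) = cos (n * y) := by
  rcases n.natAbs_eq with h | h <;> rw [h] <;> simp

theorem fourierCoeff_of_even [Fact (0 < 2 * π)] {g : ℝ → ℝ} (hg : Continuous g)
    (heven : Function.Even g) {G : AddCircle (2 * π) → ℂ} (hG : ∀ y : ℝ, G y = g y) (n : ℤ) :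
    fourierCoeff G n = ((cosCoeff g n.natAbs / 2 : ℝ) : ℂ) := by
  have hintegrand (y : ℝ) : (fourier (-n) (y : AddCircle (2 * π)) : ℂ) • G y =
      Complex.exp (-(((n : ℝ) : ℂ) * y * Complex.I)) * (g y : ℂ) := by
    rw [hG, fourier_coe_apply, smul_eq_mul]
    push_cast
    field_simp
  rw [fourierCoeff_eq_intervalIntegral G n (-π), show -π + 2 * π = π by ring]
  simp_rw [hintegrand]
  rw [integral_exp_mul_of_even hg heven, cosCoeff, Complex.real_smul, ← Complex.ofReal_mul]
  simp_rw [cos_natAbs_mul]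
  congr 1
  field_simp

theorem hasSum_cosCoeff_mul_cos {g : ℝ → ℝ} (hg : Continuous g) (heven : Function.Even g)
    (hper : Function.Periodic g (2 * π)) (hsum : Summable (cosCoeff g)) (θ : ℝ) :
    HasSum (fun m : ℕ ↦ cosCoeff g m * cos (m * θ)) (g θ + cosCoeff g 0 / 2) := by
  have : Fact (0 < 2 * π) := ⟨two_pi_pos⟩
  have hperC : Function.Periodic (fun y ↦ (g y : ℂ)) (2 * π) := fun y ↦ by simp [hper y]
  let G : C(AddCircle (2 * π), ℂ) :=
    ⟨hperC.lift, (Complex.continuous_ofReal.comp hg).quotient_liftOn' _⟩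
  have hcoeff := fourierCoeff_of_even hg heven (G := G) fun _ ↦ rfl
  have hsumC : Summable (fourierCoeff G) := by
    rw [funext hcoeff]
    refine Complex.summable_ofReal.2 (.of_nat_of_neg ?_ ?_) <;> simpa using hsum.div_const 2
  have hfourier := (has_pointwise_sum_fourier_series_of_summable hsumC θ).nat_add_neg
  have hterm (m : ℕ) : fourierCoeff G m • (fourier (m : ℤ) (θ : AddCircle (2 * π)) : ℂ) +
      fourierCoeff G (-m) • (fourier (-m : ℤ) (θ : AddCircle (2 * π)) : ℂ) =
        ((cosCoeff g m * cos (m * θ) : ℝ) : ℂ) := by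
    simp only [hcoeff, fourier_coe_apply, Int.natAbs_neg, Int.natAbs_natCast, smul_eq_mul]
    push_cast
    rw [Complex.cos, show 2 * (π : ℂ) * Complex.I * m * θ / (2 * π) = m * θ * Complex.I by
        field_simp,
      show 2 * (π : ℂ) * Complex.I * (-m) * θ / (2 * π) = -(m * θ) * Complex.I by field_simp]
    ring
  have hconst : G θ + fourierCoeff G 0 • (fourier 0 (θ : AddCircle (2 * π)) : ℂ) =
      ((g θ + cosCoeff g 0 / 2 : ℝ) : ℂ) := by
    rw [hcoeff 0, show G θ = g θ from rfl]
    simp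
  simp_rw [hterm] at hfourier
  rw [hconst] at hfourier
  exact Complex.hasSum_ofReal.1 hfourier

theorem hasSum_chebCoeff_mul_T {f : ℝ → ℝ} (hf : ContinuousOn f (Set.Icc (-1) 1))
    (hsum : Summable (chebCoeff f)) {y : ℝ} (hy : y ∈ Set.Icc (-1) 1) :
    HasSum (fun m : ℕ ↦ chebCoeff f m * (Chebyshev.T ℝ m).eval y) (f y + chebCoeff f 0 / 2) := by
  have hseries := hasSum_cosCoeff_mul_cos (g := f ∘ cos)
    (hf.comp_continuous continuous_cos cos_mem_Icc) (fun θ ↦ by simp) (fun θ ↦ by simp) hsum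
    (arccos y)
  have hcos (m : ℕ) : cos (m * arccos y) = (Chebyshev.T ℝ m).eval y := by
    simpa [cos_arccos hy.1 hy.2] using (Chebyshev.T_real_cos (arccos y) m).symm
  simp_rw [hcos] at hseries
  rwa [Function.comp_apply, cos_arccos hy.1 hy.2] at hseries

theorem hasSum_chebCoeff_mul_integral_T {f : ℝ → ℝ} (hf : ContinuousOn f (Set.Icc (-1) 1))
    (hsum : Summable (chebCoeff f)) :
    HasSum (fun m : ℕ ↦ chebCoeff f m * ∫ t in (-1 : ℝ)..1, (Chebyshev.T ℝ m).eval t)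
      ((∫ t in (-1 : ℝ)..1, f t) + chebCoeff f 0) := by
  have hmem {t : ℝ} (ht : t ∈ Set.uIoc (-1 : ℝ) 1) : t ∈ Set.Icc (-1) 1 := by
    rw [Set.uIoc_of_le (by norm_num)] at ht
    exact Set.Ioc_subset_Icc_self ht
  have hlim : (∫ t in (-1 : ℝ)..1, f t + chebCoeff f 0 / 2) =
      (∫ t in (-1 : ℝ)..1, f t) + chebCoeff f 0 := by
    rw [intervalIntegral.integral_add (hf.intervalIntegrable_of_Icc (by norm_num))
      intervalIntegrable_const, intervalIntegral.integral_const, smul_eq_mul]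
    ring
  simp_rw [← intervalIntegral.integral_const_mul]
  rw [← hlim]
  refine intervalIntegral.hasSum_integral_of_dominated_convergence (fun m _ ↦ |chebCoeff f m|)
    (fun m ↦ Continuous.aestronglyMeasurable (by fun_prop)) (fun m ↦ .of_forall fun t ht ↦ ?_)
    (.of_forall fun _ _ ↦ hsum.abs) intervalIntegrable_const
    (.of_forall fun t ht ↦ hasSum_chebCoeff_mul_T hf hsum (hmem ht))
  rw [norm_mul, norm_eq_abs, norm_eq_abs]
  exact mul_le_of_le_one_right (abs_nonneg _)
    (Chebyshev.abs_eval_T_real_le_one m (abs_le.2 (hmem ht)))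

theorem IsGaussRule.hasSum_quadError {n : ℕ} {x w : Fin n → ℝ} (h : IsGaussRule x w) {f : ℝ → ℝ}
    (hf : ContinuousOn f (Set.Icc (-1) 1)) (hsum : Summable (chebCoeff f)) :
    HasSum (fun m : ℕ ↦ chebCoeff f m * quadError x w fun t ↦ (Chebyshev.T ℝ m).eval t)
      (quadError x w f) := by
  have hnodes : HasSum (fun m : ℕ ↦ ∑ k, w k * (chebCoeff f m * (Chebyshev.T ℝ m).eval (x k)))
      (∑ k, w k * (f (x k) + chebCoeff f 0 / 2)) :=
    hasSum_sum fun k _ ↦ (hasSum_chebCoeff_mul_T hf hsum (h.mem_Icc k)).mul_left (w k)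
  have hlim : quadError x w f =
      (∫ t in (-1 : ℝ)..1, f t) + chebCoeff f 0 - ∑ k, w k * (f (x k) + chebCoeff f 0 / 2) := by
    simp only [quadError, mul_add, Finset.sum_add_distrib, ← Finset.sum_mul, h.sum_weight]
    ring
  have hterm (m : ℕ) : chebCoeff f m * (quadError x w fun t ↦ (Chebyshev.T ℝ m).eval t) =
      chebCoeff f m * (∫ t in (-1 : ℝ)..1, (Chebyshev.T ℝ m).eval t) -
        ∑ k, w k * (chebCoeff f m * (Chebyshev.T ℝ m).eval (x k)) := by
    rw [quadError, mul_sub, Finset.mul_sum]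
    simp only [mul_left_comm]
  simp_rw [hterm]
  rw [hlim]
  exact (hasSum_chebCoeff_mul_integral_T hf hsum).sub hnodes

end ChebyshevSeries

section Rate

open Polynomial Real

theorem hasSum_sum_range_blocks {α : Type*} [AddCommMonoid α] [TopologicalSpace α]
    [ContinuousAdd α] [RegularSpace α] {g : ℕ → α} {a : α} (hg : HasSum g a) {K : ℕ} (hK : 0 < K) :
    HasSum (fun q ↦ ∑ i ∈ Finset.range K, g (q * K + i)) a := by
  have : NeZero K := ⟨hK.ne'⟩
  simp_rw [Finset.sum_range]
  exact ((Nat.divModEquiv K).symm.hasSum_iff.2 hg).prod_fiberwise fun q ↦ hasSum_fintype _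

theorem summable_of_abs_le_mul_rpow {a : ℕ → ℝ} {A s : ℝ} (hs : 0 < s)
    (ha : ∀ m : ℕ, 1 ≤ m → |a m| ≤ A * (m : ℝ) ^ (-s - 1)) : Summable a :=
  ((summable_nat_rpow.2 (by linarith : -s - 1 < -1)).mul_left A).of_norm_bounded_eventually_nat <|
    (Filter.eventually_ge_atTop 1).mono ha

theorem rpow_le_of_sq_le_log {s t δ B : ℝ} (ht0 : 0 < t) (hst : s / 2 < t) (hδ : 0 ≤ δ)
    (hB : 0 ≤ B) {n : ℕ} (hn : 1 ≤ n) (h : δ ^ 2 ≤ B * (1 + log n) / n ^ 2) :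
    δ ^ t ≤ (B * (1 + 1 / (2 - s / t))) ^ (t / 2) * (n : ℝ) ^ (-(s / 2)) := by
  have hn0 : (0 : ℝ) < n := by exact_mod_cast hn
  have hε : 0 < 2 - s / t := sub_pos.2 <| (div_lt_iff₀ ht0).2 (by linarith)
  have hlog : 1 + log n ≤ (1 + 1 / (2 - s / t)) * (n : ℝ) ^ (2 - s / t) := by
    have hone := one_le_rpow (by exact_mod_cast hn : (1 : ℝ) ≤ n) hε.le
    have := log_le_rpow_div hn0.le hε
    rw [add_mul, one_mul, one_div_mul_eq_div]
    linarith
  have hsq : δ ^ 2 ≤ B * (1 + 1 / (2 - s / t)) * (n : ℝ) ^ (2 - s / t - 2) := by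
    refine h.trans ?_
    rw [rpow_sub hn0, rpow_two, mul_div_assoc', mul_assoc]
    gcongr
  calc δ ^ t = (δ ^ 2) ^ (t / 2) := by
        rw [← rpow_natCast_mul hδ]
        congr 1
        push_cast
        ring
    _ ≤ (B * (1 + 1 / (2 - s / t)) * (n : ℝ) ^ (2 - s / t - 2)) ^ (t / 2) := by gcongr
    _ = (B * (1 + 1 / (2 - s / t))) ^ (t / 2) * (n : ℝ) ^ (-(s / 2)) := by
        rw [mul_rpow (by positivity) (by positivity), ← rpow_mul hn0.le]
        congr 2
        field_simp
        ring

theorem rpow_mul_block_le {s t δ S M N Q : ℝ} (hs : s ≤ 2) (ht : 0 ≤ t) (hδ : 0 ≤ δ) (hS : 0 ≤ S)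
    (hN : 1 ≤ N) (hQ : 1 ≤ Q) (hδt : δ ^ t ≤ M * N ^ (-(s / 2))) :
    (Q * N) ^ (-s - 1) * (32 * S + 24 * N * (Q * δ) ^ t) ≤
      (32 * S + 24 * M) * N ^ (-(3 * s / 2)) * Q ^ (t - s - 1) := by
  have hN0 : 0 < N := by linarith
  have hQ0 : 0 < Q := by linarith
  have hN' : N * N ^ (-(s / 2)) = N ^ (1 - s / 2) := by
    rw [sub_eq_add_neg, rpow_add hN0, rpow_one]
  have hconst : S ≤ S * (Q ^ t * N ^ (1 - s / 2)) :=
    le_mul_of_one_le_right hS <|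
      one_le_mul_of_one_le_of_one_le (one_le_rpow hQ ht) (one_le_rpow hN (by linarith))
  have hdefect : N * (Q * δ) ^ t ≤ M * (Q ^ t * N ^ (1 - s / 2)) := by
    calc N * (Q * δ) ^ t = N * Q ^ t * δ ^ t := by rw [mul_rpow hQ0.le hδ, mul_assoc]
      _ ≤ N * Q ^ t * (M * N ^ (-(s / 2))) := by gcongr
      _ = M * (Q ^ t * N ^ (1 - s / 2)) := by rw [← hN']; ring
  calc (Q * N) ^ (-s - 1) * (32 * S + 24 * N * (Q * δ) ^ t)
      ≤ (Q * N) ^ (-s - 1) * ((32 * S + 24 * M) * (Q ^ t * N ^ (1 - s / 2))) := by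
        gcongr
        linarith
    _ = (32 * S + 24 * M) * N ^ (-(3 * s / 2)) * Q ^ (t - s - 1) := by
        rw [mul_rpow hQ0.le hN0.le, show -(3 * s / 2) = -s - 1 + (1 - s / 2) by ring,
          show t - s - 1 = -s - 1 + t by ring, rpow_add hN0, rpow_add hQ0]
        ring

namespace IsGaussRule

variable {n : ℕ} {x w : Fin n → ℝ}

theorem abs_sum_block_mul_quadError_T_le (h : IsGaussRule x w) {a : ℕ → ℝ} {A s t : ℝ}
    (hs : 0 < s) (ha : ∀ m : ℕ, 1 ≤ m → |a m| ≤ A * (m : ℝ) ^ (-s - 1)) (ht0 : 0 ≤ t) (ht1 : t ≤ 1)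
    (q : ℕ) :
    |∑ i ∈ Finset.range (4 * n + 2), a (q * (4 * n + 2) + i + 2 * n) *
      quadError x w fun y ↦ (Chebyshev.T ℝ (q * (4 * n + 2) + i + 2 * n : ℕ)).eval y| ≤
      A * (((q + 1 : ℕ) * n : ℝ) ^ (-s - 1) *
        (32 * ∑' z, lorentzian z + 24 * n * ((q + 1 : ℕ) * aliasingDefect x w) ^ t)) := by
  have hA : 0 ≤ A := by simpa using (abs_nonneg _).trans (ha 1 le_rfl)
  have hn := h.size_pos
  have hcoeff (i : ℕ) :
      |a (q * (4 * n + 2) + i + 2 * n)| ≤ A * ((q + 1 : ℕ) * n : ℝ) ^ (-s - 1) := by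
    refine (ha _ (by lia)).trans (mul_le_mul_of_nonneg_left ?_ hA)
    refine rpow_le_rpow_of_nonpos (by positivity) ?_ (by linarith)
    exact_mod_cast (by nlinarith : (q + 1) * n ≤ q * (4 * n + 2) + i + 2 * n)
  refine (Finset.abs_sum_le_sum_abs _ _).trans ?_
  simp_rw [abs_mul]
  refine (Finset.sum_le_sum fun i _ ↦
    mul_le_mul_of_nonneg_right (hcoeff i) (abs_nonneg _)).trans ?_
  rw [← Finset.mul_sum, mul_assoc]
  gcongr
  exact h.sum_block_abs_quadError_T_le q ht0 ht1

theorem hasSum_sum_block_quadError (h : IsGaussRule x w) {f : ℝ → ℝ}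
    (hf : ContinuousOn f (Set.Icc (-1) 1)) (hsum : Summable (chebCoeff f)) :
    HasSum (fun q ↦ ∑ i ∈ Finset.range (4 * n + 2), chebCoeff f (q * (4 * n + 2) + i + 2 * n) *
      quadError x w fun y ↦ (Chebyshev.T ℝ (q * (4 * n + 2) + i + 2 * n : ℕ)).eval y)
      (quadError x w f) := by
  have hexact : ∑ m ∈ Finset.range (2 * n),
      chebCoeff f m * (quadError x w fun y ↦ (Chebyshev.T ℝ m).eval y) = 0 :=
    Finset.sum_eq_zero fun m hm ↦ by
      rw [h.quadError_eq_zero (by simp at hm ⊢; lia), mul_zero]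
  have htail := (hasSum_nat_add_iff' (2 * n)).2 (h.hasSum_quadError hf hsum)
  rw [hexact, sub_zero] at htail
  exact hasSum_sum_range_blocks htail (by lia)

theorem abs_quadError_chebyshev_le (h : IsGaussRule x w) {f : ℝ → ℝ} {A s t : ℝ}
    (hf : ContinuousOn f (Set.Icc (-1) 1))
    (ha : ∀ m : ℕ, 1 ≤ m → |chebCoeff f m| ≤ A * (m : ℝ) ^ (-s - 1)) (hst : s / 2 < t)
    (ht1 : t ≤ 1) (hts : t < s) :
    |quadError x w f| ≤
      A * ((32 * ∑' z, lorentzian z + 24 * (32 * (1 + 1 / (2 - s / t))) ^ (t / 2)) *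
        (n : ℝ) ^ (-(3 * s / 2)) * ∑' q : ℕ, ((q + 1 : ℕ) : ℝ) ^ (t - s - 1)) := by
  have hs0 : 0 < s := by linarith
  have ht0 : 0 < t := by linarith
  have hA : 0 ≤ A := by simpa using (abs_nonneg _).trans (ha 1 le_rfl)
  have hZ : Summable fun q : ℕ ↦ ((q + 1 : ℕ) : ℝ) ^ (t - s - 1) :=
    (summable_nat_add_iff 1).2 (summable_nat_rpow.2 (by linarith))
  refine (h.hasSum_sum_block_quadError hf (summable_of_abs_le_mul_rpow hs0 ha)).norm_le_of_bounded
    ((hZ.hasSum.mul_left _).mul_left A) fun q ↦ ?_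
  refine (h.abs_sum_block_mul_quadError_T_le hs0 ha ht0.le ht1 q).trans ?_
  refine mul_le_mul_of_nonneg_left ?_ hA
  exact rpow_mul_block_le (by linarith) ht0.le h.aliasingDefect_nonneg
    (tsum_nonneg lorentzian_nonneg) (by exact_mod_cast h.size_pos) (by simp)
    (rpow_le_of_sq_le_log ht0 hst h.aliasingDefect_nonneg (by norm_num) h.size_pos
      h.sq_aliasingDefect_le)

end IsGaussRule

end Rate

/-- If `f` is continuous on `[-1,1]` and of class `X^s` with `0 < s < 2`, then the error of the
`n`-point Gauss rule is `O(n^{-3s/2})`. -/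
theorem gauss_rate_small_s (s : ℝ) (hs1 : 0 < s) (hs2 : s < 2) (f : ℝ → ℝ)
    (hf : ContinuousOn f (Set.Icc (-1) 1))
    (hXs : ∃ A : ℝ, ∀ m : ℕ, 1 ≤ m → |chebCoeff f m| ≤ A * (m : ℝ) ^ (-s - 1)) :
    ∃ C > 0, ∀ n : ℕ, 1 ≤ n → ∀ x w : Fin n → ℝ,
      (∀ k, x k ∈ Set.Icc (-1:ℝ) 1) → (∀ k, 0 < w k) →
      (∀ p : Polynomial ℝ, p.natDegree ≤ 2 * n - 1 →
        ∑ k : Fin n, w k * p.eval (x k) = ∫ t in (-1:ℝ)..1, p.eval t) →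
      |(∫ t in (-1:ℝ)..1, f t) - ∑ k : Fin n, w k * f (x k)| ≤ C * (n : ℝ) ^ (-(3 * s / 2)) := by
  obtain ⟨A, hA⟩ := hXs
  obtain ⟨t, hst, ht⟩ : ∃ t, s / 2 < t ∧ t < min 1 s :=
    exists_between (lt_min (by linarith) (by linarith))
  obtain ⟨ht1, hts⟩ := lt_min_iff.1 ht
  set D := A * ((32 * ∑' z, lorentzian z + 24 * (32 * (1 + 1 / (2 - s / t))) ^ (t / 2)) *
    ∑' q : ℕ, ((q + 1 : ℕ) : ℝ) ^ (t - s - 1)) with hD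
  refine ⟨max D 1, by positivity, fun n _ x w hx hw hexact ↦ ?_⟩
  have hrule : IsGaussRule x w := ⟨hx, hw, hexact⟩
  calc |quadError x w f|
      ≤ D * (n : ℝ) ^ (-(3 * s / 2)) :=
        (hrule.abs_quadError_chebyshev_le hf hA hst ht1.le hts).trans_eq (by rw [hD]; ring)
    _ ≤ max D 1 * (n : ℝ) ^ (-(3 * s / 2)) := by gcongr; exact le_max_left D 1
end

section
/- Let s > 0 and −1 < ξ < 1, and let f_s : [−1,1] → ℝ be given by f_s(x) = |x − ξ|^s. Then f_s is of class X^s; that is, its Chebyshev coefficients satisfy a_m = O(m^{−s−1}) as m → ∞ (there is A > 0 with |a_m| ≤ A·m^{−s−1} for all m ≥ 1). -/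
/-!
With `ξ = cos φ`, cutting `[0, π]` at the singularity `θ = φ` and reflecting the right-hand piece
by `θ ↦ π - θ` expresses the Chebyshev coefficients of `|x - ξ| ^ s` through the integrals
`J s ν = ∫ θ in 0..φ, (cos θ - cos φ) ^ s * cos (ν θ)` for the angles `φ` and `π - φ`.

For `-1 < s ≤ 0` the weight increases on `[0, φ)` and is at most a multiple of `(φ - θ) ^ s`.
Cutting at distance `1 / ν` from `φ`, integration by parts away from `φ` and the size of the weight
near `φ` both give `O(ν ^ (-s - 1))`. For `s > 0` an integration by parts gives
`ν * J s ν = s / 2 * (J (s - 1) (ν - 1) - J (s - 1) (ν + 1))`, so each unit added to the exponent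
gains a factor `1 / ν`.
-/

open Asymptotics Filter MeasureTheory Set
open Real (cos sin)
open scoped Real

section OscillatoryIntegrals

variable {a b C s : ℝ} {u u' : ℝ → ℝ}

lemma mul_integral_mul_cos (hab : a ≤ b) (hu : ContinuousOn u (Icc a b))
    (hderiv : ∀ θ ∈ Ioo a b, HasDerivAt u (u' θ) θ) (hu' : IntervalIntegrable u' volume a b)
    (ν : ℝ) :
    ν * ∫ θ in a..b, u θ * cos (ν * θ) =
      u b * sin (ν * b) - u a * sin (ν * a) - ∫ θ in a..b, u' θ * sin (ν * θ) := by
  have hsin (θ : ℝ) : HasDerivAt (fun θ ↦ sin (ν * θ)) (ν * cos (ν * θ)) θ := by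
    simpa [mul_comm] using ((hasDerivAt_id θ).const_mul ν).sin
  rw [← intervalIntegral.integral_const_mul,
    ← intervalIntegral.integral_mul_deriv_eq_deriv_mul_of_hasDerivAt (by rwa [uIcc_of_le hab])
      (by fun_prop) (by simpa [hab] using hderiv) (fun θ _ ↦ hsin θ) hu'
      (Continuous.intervalIntegrable (by fun_prop) a b)]
  simp only [mul_left_comm]

lemma abs_mul_abs_integral_mul_cos_le (hab : a ≤ b) (hu : ContinuousOn u (Icc a b))
    (hderiv : ∀ θ ∈ Ioo a b, HasDerivAt u (u' θ) θ) (hu' : ∀ θ ∈ Ioo a b, 0 ≤ u' θ)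
    (hua : 0 ≤ u a) (ν : ℝ) :
    |ν| * |∫ θ in a..b, u θ * cos (ν * θ)| ≤ 2 * u b := by
  have hint : IntervalIntegrable u' volume a b :=
    (intervalIntegrable_iff_integrableOn_Ioc_of_le hab).2
      (intervalIntegral.integrableOn_deriv_of_nonneg hu hderiv hu')
  have hFTC : ∫ θ in a..b, u' θ = u b - u a :=
    intervalIntegral.integral_eq_sub_of_hasDerivAt_of_le hab hu hderiv hint
  have hsin : |∫ θ in a..b, u' θ * sin (ν * θ)| ≤ u b - u a := by
    rw [← hFTC, ← Real.norm_eq_abs]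
    refine intervalIntegral.norm_integral_le_of_norm_le hab ?_ hint
    filter_upwards [Measure.ae_ne volume b] with θ hθb hθ
    have hθ' : 0 ≤ u' θ := hu' θ ⟨hθ.1, hθ.2.lt_of_ne hθb⟩
    rw [norm_mul, Real.norm_of_nonneg hθ']
    exact mul_le_of_le_one_right hθ' (Real.abs_sin_le_one _)
  have hub : 0 ≤ u b := by
    have : 0 ≤ u b - u a := (abs_nonneg _).trans hsin
    linarith
  have hbdry {x : ℝ} (hx : 0 ≤ u x) : |u x * sin (ν * x)| ≤ u x := by
    rw [abs_mul, abs_of_nonneg hx]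
    exact mul_le_of_le_one_right hx (Real.abs_sin_le_one _)
  rw [← abs_mul, mul_integral_mul_cos hab hu hderiv hint]
  calc |u b * sin (ν * b) - u a * sin (ν * a) - ∫ θ in a..b, u' θ * sin (ν * θ)|
      ≤ |u b * sin (ν * b)| + |u a * sin (ν * a)| + |∫ θ in a..b, u' θ * sin (ν * θ)| :=
        (abs_sub _ _).trans (by gcongr; exact abs_sub _ _)
    _ ≤ u b + u a + (u b - u a) := by gcongr <;> exact hbdry ‹_›
    _ = 2 * u b := by ring

lemma intervalIntegrable_const_sub_rpow (hs : -1 < s) (a b : ℝ) :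
    IntervalIntegrable (fun θ ↦ (b - θ) ^ s) volume a b := by
  simpa using
    (intervalIntegral.intervalIntegrable_rpow' (a := b - a) (b := 0) hs).comp_sub_left b

lemma integral_const_sub_rpow (hs : -1 < s) (a b : ℝ) :
    ∫ θ in a..b, (b - θ) ^ s = (b - a) ^ (s + 1) / (s + 1) := by
  rw [intervalIntegral.integral_comp_sub_left (fun x ↦ x ^ s), integral_rpow (.inl hs), sub_self,
    Real.zero_rpow (by linarith), sub_zero]

lemma intervalIntegrable_of_abs_le_rpow (hab : a ≤ b) (hs : -1 < s)
    (hu : ContinuousOn u (Ioo a b)) (hle : ∀ θ ∈ Ioo a b, |u θ| ≤ C * (b - θ) ^ s) :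
    IntervalIntegrable u volume a b := by
  have hdom := (intervalIntegrable_const_sub_rpow hs a b).const_mul C
  rw [intervalIntegrable_iff_integrableOn_Ioo_of_le hab] at hdom ⊢
  exact hdom.mono' (hu.aestronglyMeasurable measurableSet_Ioo)
    ((ae_restrict_iff' measurableSet_Ioo).2 (.of_forall hle))

lemma abs_integral_le_of_abs_le_rpow (hab : a ≤ b) (hs : -1 < s)
    (hle : ∀ θ ∈ Ioo a b, |u θ| ≤ C * (b - θ) ^ s) :
    |∫ θ in a..b, u θ| ≤ C * ((b - a) ^ (s + 1) / (s + 1)) := by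
  rw [← integral_const_sub_rpow hs, ← intervalIntegral.integral_const_mul, ← Real.norm_eq_abs]
  refine intervalIntegral.norm_integral_le_of_norm_le hab ?_
    ((intervalIntegrable_const_sub_rpow hs a b).const_mul C)
  filter_upwards [Measure.ae_ne volume b] with θ hθb hθ
  exact hle θ ⟨hθ.1, hθ.2.lt_of_ne hθb⟩

theorem isBigO_integral_mul_cos_of_le_rpow (hab : a < b) (hs : -1 < s)
    (hu : ContinuousOn u (Ico a b)) (hderiv : ∀ θ ∈ Ioo a b, HasDerivAt u (u' θ) θ)
    (hu' : ∀ θ ∈ Ioo a b, 0 ≤ u' θ) (hnonneg : ∀ θ ∈ Ico a b, 0 ≤ u θ)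
    (hle : ∀ θ ∈ Ico a b, u θ ≤ C * (b - θ) ^ s) :
    (fun ν ↦ ∫ θ in a..b, u θ * cos (ν * θ)) =O[atTop] fun ν ↦ ν ^ (-s - 1) := by
  refine .of_bound (2 * C + C / (s + 1)) ?_
  filter_upwards [eventually_gt_atTop 0, eventually_ge_atTop (b - a)⁻¹] with ν hν hνab
  have hcut : b - ν⁻¹ ∈ Ico a b :=
    ⟨by linarith [inv_le_of_inv_le₀ (sub_pos.2 hab) hνab], by linarith [inv_pos.2 hν]⟩
  have habs : ∀ θ ∈ Ioo a b, |u θ * cos (ν * θ)| ≤ C * (b - θ) ^ s := fun θ hθ ↦ by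
    have hθ' := Ioo_subset_Ico_self hθ
    rw [abs_mul, abs_of_nonneg (hnonneg θ hθ')]
    exact (mul_le_of_le_one_right (hnonneg θ hθ') (Real.abs_cos_le_one _)).trans (hle θ hθ')
  have hint : IntervalIntegrable (fun θ ↦ u θ * cos (ν * θ)) volume a b :=
    intervalIntegrable_of_abs_le_rpow hab.le hs
      ((hu.mono Ioo_subset_Ico_self).mul (by fun_prop)) habs
  have hcut' : b - ν⁻¹ ∈ uIcc a b := uIcc_of_le hab.le ▸ Ico_subset_Icc_self hcut
  have far : |∫ θ in a..(b - ν⁻¹), u θ * cos (ν * θ)| ≤ 2 * C * ν ^ (-s - 1) := by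
    have hparts := abs_mul_abs_integral_mul_cos_le hcut.1
      (hu.mono (Icc_subset_Ico_right hcut.2)) (fun θ hθ ↦ hderiv θ ⟨hθ.1, hθ.2.trans hcut.2⟩)
      (fun θ hθ ↦ hu' θ ⟨hθ.1, hθ.2.trans hcut.2⟩) (hnonneg a ⟨le_rfl, hab⟩) ν
    have hcut_le := hle _ hcut
    rw [sub_sub_cancel, Real.inv_rpow hν.le, ← Real.rpow_neg hν.le] at hcut_le
    rw [abs_of_pos hν] at hparts
    rw [Real.rpow_sub_one hν.ne', ← mul_div_assoc, le_div_iff₀' hν]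
    linarith
  have near : |∫ θ in (b - ν⁻¹)..b, u θ * cos (ν * θ)| ≤ C / (s + 1) * ν ^ (-s - 1) := by
    refine (abs_integral_le_of_abs_le_rpow hcut.2.le hs
      fun θ hθ ↦ habs θ ⟨hcut.1.trans_lt hθ.1, hθ.2⟩).trans_eq ?_
    rw [sub_sub_cancel, Real.inv_rpow hν.le, ← Real.rpow_neg hν.le, neg_add']
    ring
  rw [← intervalIntegral.integral_add_adjacent_intervals
      (hint.mono_set (uIcc_subset_uIcc_left hcut')) (hint.mono_set (uIcc_subset_uIcc_right hcut')),
    Real.norm_eq_abs, Real.norm_of_nonneg (by positivity), add_mul]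
  exact (abs_add_le _ _).trans (add_le_add far near)

end OscillatoryIntegrals

lemma isBigO_rpow_comp_add_const {f : ℝ → ℝ} {r : ℝ} (hf : f =O[atTop] fun x ↦ x ^ r) (c : ℝ) :
    (fun x ↦ f (x + c)) =O[atTop] fun x ↦ x ^ r := by
  have hshift : Tendsto (fun x : ℝ ↦ x + c) atTop atTop :=
    tendsto_atTop_add_const_right _ c tendsto_id
  have hequiv : (fun x : ℝ ↦ x + c) =Θ[atTop] fun x ↦ x :=
    (IsEquivalent.refl.add_isLittleO (isLittleO_const_id_atTop c)).isTheta
  exact (hf.comp_tendsto hshift).trans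
    (hequiv.rpow (hshift.eventually_ge_atTop 0) (eventually_ge_atTop 0)).isBigO

section MehlerDirichlet

variable {φ s : ℝ}

lemma exists_mul_sub_le_cos_sub_cos (hφ : φ ∈ Ioo 0 π) :
    ∃ c > 0, ∀ θ ∈ Icc 0 φ, c * (φ - θ) ≤ cos θ - cos φ := by
  set c := min (sin (φ / 2)) (sin φ)
  have hc : 0 < c :=
    lt_min (Real.sin_pos_of_pos_of_lt_pi (by linarith [hφ.1]) (by linarith [hφ.1, hφ.2]))
      (Real.sin_pos_of_mem_Ioo hφ)
  refine ⟨2 / π * c, by positivity, fun θ hθ ↦ ?_⟩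
  have hmid : c ≤ sin ((φ + θ) / 2) :=
    strictConcaveOn_sin_Icc.concaveOn.min_le_of_mem_Icc
      ⟨by linarith [hφ.1], by linarith [hφ.1, hφ.2]⟩ (Ioo_subset_Icc_self hφ)
      ⟨by linarith [hθ.1], by linarith [hθ.2]⟩
  have hhalf : 2 / π * ((φ - θ) / 2) ≤ sin ((φ - θ) / 2) :=
    Real.mul_le_sin (by linarith [hθ.2]) (by linarith [hθ.1, hφ.2])
  have hhalf_nonneg : 0 ≤ 2 / π * ((φ - θ) / 2) :=
    mul_nonneg (by positivity) (by linarith [hθ.2])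
  calc 2 / π * c * (φ - θ) = 2 * (c * (2 / π * ((φ - θ) / 2))) := by ring
    _ ≤ 2 * (sin ((φ + θ) / 2) * sin ((φ - θ) / 2)) := by gcongr; exact hc.le.trans hmid
    _ = cos θ - cos φ := by
      rw [← neg_sub (cos φ), Real.cos_sub_cos]
      ring

lemma cos_sub_cos_pos (hφ : φ ≤ π) {θ : ℝ} (hθ : θ ∈ Ico 0 φ) : 0 < cos θ - cos φ :=
  sub_pos.2 (Real.cos_lt_cos_of_nonneg_of_le_pi hθ.1 hφ hθ.2)

lemma hasDerivAt_cos_sub_cos_rpow (hφ : φ ≤ π) (s : ℝ) {θ : ℝ} (hθ : θ ∈ Ico 0 φ) :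
    HasDerivAt (fun θ ↦ (cos θ - cos φ) ^ s) (-s * (cos θ - cos φ) ^ (s - 1) * sin θ) θ :=
  (((Real.hasDerivAt_cos θ).sub_const _).rpow_const
    (.inl (cos_sub_cos_pos hφ hθ).ne')).congr_deriv (by ring)

lemma continuousOn_cos_sub_cos_rpow (hφ : φ ≤ π) (s : ℝ) :
    ContinuousOn (fun θ ↦ (cos θ - cos φ) ^ s) (Ico 0 φ) :=
  fun _ hθ ↦ (hasDerivAt_cos_sub_cos_rpow hφ s hθ).continuousAt.continuousWithinAt

lemma exists_cos_sub_cos_rpow_le (hφ : φ ∈ Ioo 0 π) (hs : s ≤ 0) :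
    ∃ C, ∀ θ ∈ Ico 0 φ, (cos θ - cos φ) ^ s ≤ C * (φ - θ) ^ s := by
  obtain ⟨c, hc, hle⟩ := exists_mul_sub_le_cos_sub_cos hφ
  refine ⟨c ^ s, fun θ hθ ↦ ?_⟩
  have hpos : 0 < φ - θ := sub_pos.2 hθ.2
  rw [← Real.mul_rpow hc.le hpos.le]
  exact Real.rpow_le_rpow_of_nonpos (by positivity) (hle θ (Ico_subset_Icc_self hθ)) hs

lemma intervalIntegrable_cos_sub_cos_rpow (hφ : φ ∈ Ioo 0 π) (hs : -1 < s) :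
    IntervalIntegrable (fun θ ↦ (cos θ - cos φ) ^ s) volume 0 φ := by
  rcases le_total 0 s with hs0 | hs0
  · exact ((Real.continuous_cos.sub continuous_const).rpow_const
      fun _ ↦ .inr hs0).intervalIntegrable _ _
  · obtain ⟨C, hC⟩ := exists_cos_sub_cos_rpow_le hφ hs0
    refine intervalIntegrable_of_abs_le_rpow (C := C) hφ.1.le hs
      ((continuousOn_cos_sub_cos_rpow hφ.2.le s).mono Ioo_subset_Ico_self) fun θ hθ ↦ ?_
    rw [abs_of_nonneg (Real.rpow_nonneg (cos_sub_cos_pos hφ.2.le (Ioo_subset_Ico_self hθ)).le s)]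
    exact hC θ (Ioo_subset_Ico_self hθ)

/-- The Mehler–Dirichlet integral with angle `φ`, exponent `s` and frequency `ν`; the case
`s = -1/2`, `ν = n + 1/2` is, up to the factor `√2 / π`, the Legendre polynomial `P_n (cos φ)`.
The frequency is real so that the recurrence in `s` can shift it in both directions. -/
noncomputable def mehlerDirichlet (φ s ν : ℝ) : ℝ :=
  ∫ θ in 0..φ, (cos θ - cos φ) ^ s * cos (ν * θ)

theorem mul_mehlerDirichlet (hφ : φ ∈ Ioo 0 π) (hs : 0 < s) (ν : ℝ) :
    ν * mehlerDirichlet φ s ν =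
      s / 2 * (mehlerDirichlet φ (s - 1) (ν - 1) - mehlerDirichlet φ (s - 1) (ν + 1)) := by
  have hint := intervalIntegrable_cos_sub_cos_rpow hφ (s := s - 1) (by linarith)
  have hcont : Continuous fun θ ↦ (cos θ - cos φ) ^ s :=
    (Real.continuous_cos.sub continuous_const).rpow_const fun _ ↦ .inr hs.le
  rw [mehlerDirichlet, mul_integral_mul_cos hφ.1.le hcont.continuousOn
    (fun θ hθ ↦ hasDerivAt_cos_sub_cos_rpow hφ.2.le s (Ioo_subset_Ico_self hθ))
    ((hint.const_mul (-s)).mul_continuousOn (by fun_prop))]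
  simp only [mehlerDirichlet, sub_self, Real.zero_rpow hs.ne', mul_zero, Real.sin_zero, zero_mul,
    zero_sub]
  rw [← intervalIntegral.integral_sub (hint.mul_continuousOn (by fun_prop))
      (hint.mul_continuousOn (by fun_prop)), ← intervalIntegral.integral_const_mul,
    ← intervalIntegral.integral_neg]
  refine intervalIntegral.integral_congr fun θ _ ↦ ?_
  simp only [sub_mul, add_mul, one_mul, Real.cos_sub, Real.cos_add]
  ring

lemma isBigO_mehlerDirichlet_of_nonpos (hφ : φ ∈ Ioo 0 π) (hs : -1 < s) (hs0 : s ≤ 0) :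
    mehlerDirichlet φ s =O[atTop] fun ν ↦ ν ^ (-s - 1) := by
  obtain ⟨C, hC⟩ := exists_cos_sub_cos_rpow_le hφ hs0
  have hpos {θ : ℝ} (hθ : θ ∈ Ico 0 φ) (r : ℝ) : 0 ≤ (cos θ - cos φ) ^ r :=
    Real.rpow_nonneg (cos_sub_cos_pos hφ.2.le hθ).le r
  exact isBigO_integral_mul_cos_of_le_rpow hφ.1 hs (continuousOn_cos_sub_cos_rpow hφ.2.le s)
    (fun θ hθ ↦ hasDerivAt_cos_sub_cos_rpow hφ.2.le s (Ioo_subset_Ico_self hθ))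
    (fun θ hθ ↦ mul_nonneg
      (mul_nonneg (neg_nonneg.2 hs0) (hpos (Ioo_subset_Ico_self hθ) _))
      (Real.sin_nonneg_of_nonneg_of_le_pi hθ.1.le (hθ.2.trans hφ.2).le))
    (fun θ hθ ↦ hpos hθ s) hC

lemma isBigO_mehlerDirichlet_of_sub_one (hφ : φ ∈ Ioo 0 π) (hs : 0 < s)
    (h : mehlerDirichlet φ (s - 1) =O[atTop] fun ν ↦ ν ^ (-s)) :
    mehlerDirichlet φ s =O[atTop] fun ν ↦ ν ^ (-s - 1) := by
  have hdiff : (fun ν ↦ s / 2 * (mehlerDirichlet φ (s - 1) (ν - 1) -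
      mehlerDirichlet φ (s - 1) (ν + 1))) =O[atTop] fun ν ↦ ν ^ (-s) :=
    ((isBigO_rpow_comp_add_const h (-1)).sub (isBigO_rpow_comp_add_const h 1)).const_mul_left _
  refine (hdiff.mul (isBigO_refl (fun ν : ℝ ↦ ν⁻¹) atTop)).congr' ?_ ?_ <;>
    filter_upwards [eventually_ne_atTop 0] with ν hν
  · rw [← mul_mehlerDirichlet hφ hs, mul_comm ν, mul_inv_cancel_right₀ hν]
  · rw [Real.rpow_sub_one hν, div_eq_mul_inv]

theorem isBigO_mehlerDirichlet (hφ : φ ∈ Ioo 0 π) (hs : -1 < s) :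
    mehlerDirichlet φ s =O[atTop] fun ν ↦ ν ^ (-s - 1) := by
  obtain ⟨n, hn⟩ := exists_nat_ge s
  induction n generalizing s with
  | zero => exact isBigO_mehlerDirichlet_of_nonpos hφ hs (by simpa using hn)
  | succ n ih =>
    rcases le_or_gt s 0 with hs0 | hs0
    · exact isBigO_mehlerDirichlet_of_nonpos hφ hs hs0
    · refine isBigO_mehlerDirichlet_of_sub_one hφ hs0 ?_
      have hprev := ih (s := s - 1) (by linarith) (by push_cast at hn; linarith)
      rwa [show -(s - 1) - 1 = -s by ring] at hprev

lemma abs_cos_sub_cos_rpow_mul_cos_eqOn (hφ : φ ∈ Ioo 0 π) (s ν : ℝ) :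
    EqOn (fun θ ↦ (cos θ - cos φ) ^ s * cos (ν * θ)) (fun θ ↦ |cos θ - cos φ| ^ s * cos (ν * θ))
      (uIcc 0 φ) := by
  intro θ hθ
  rw [uIcc_of_le hφ.1.le] at hθ
  have hnonneg := sub_nonneg.2 (Real.cos_le_cos_of_nonneg_of_le_pi hθ.1 hφ.2.le hθ.2)
  simp only [abs_of_nonneg hnonneg]

lemma intervalIntegrable_abs_cos_sub_cos_rpow_mul_cos (hφ : φ ∈ Ioo 0 π) (hs : -1 < s) (ν : ℝ) :
    IntervalIntegrable (fun θ ↦ |cos θ - cos φ| ^ s * cos (ν * θ)) volume 0 φ :=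
  ((intervalIntegrable_cos_sub_cos_rpow hφ hs).mul_continuousOn (by fun_prop)).congr
    ((abs_cos_sub_cos_rpow_mul_cos_eqOn hφ s ν).mono uIoc_subset_uIcc)

lemma integral_abs_cos_sub_cos_rpow_mul_cos (hφ : φ ∈ Ioo 0 π) (s ν : ℝ) :
    ∫ θ in 0..φ, |cos θ - cos φ| ^ s * cos (ν * θ) = mehlerDirichlet φ s ν :=
  (intervalIntegral.integral_congr (abs_cos_sub_cos_rpow_mul_cos_eqOn hφ s ν)).symm

lemma abs_cos_pi_sub_sub_cos_rpow_mul_cos (φ s θ : ℝ) (m : ℕ) :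
    |cos (π - θ) - cos φ| ^ s * cos (m * (π - θ)) =
      (-1) ^ m * (|cos θ - cos (π - φ)| ^ s * cos (m * θ)) := by
  rw [mul_sub, Real.cos_nat_mul_pi_sub, Real.cos_pi_sub, Real.cos_pi_sub, ← abs_neg]
  ring_nf

theorem chebCoeff_abs_sub_cos_rpow (hφ : φ ∈ Ioo 0 π) (hs : -1 < s) (m : ℕ) :
    chebCoeff (fun x ↦ |x - cos φ| ^ s) m =
      2 / π * (mehlerDirichlet φ s m + (-1) ^ m * mehlerDirichlet (π - φ) s m) := by
  have hφ' : π - φ ∈ Ioo 0 π := ⟨sub_pos.2 hφ.2, sub_lt_self _ hφ.1⟩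
  have hright : IntervalIntegrable (fun θ ↦ |cos θ - cos φ| ^ s * cos (m * θ)) volume φ π := by
    have hrefl := ((intervalIntegrable_abs_cos_sub_cos_rpow_mul_cos hφ' hs m).const_mul
      ((-1) ^ m)).comp_sub_left π
    simpa only [← abs_cos_pi_sub_sub_cos_rpow_mul_cos, sub_sub_cancel, sub_zero]
      using hrefl.symm
  rw [chebCoeff, ← intervalIntegral.integral_add_adjacent_intervals
      (intervalIntegrable_abs_cos_sub_cos_rpow_mul_cos hφ hs m) hright,
    integral_abs_cos_sub_cos_rpow_mul_cos hφ, ← integral_abs_cos_sub_cos_rpow_mul_cos hφ',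
    ← intervalIntegral.integral_const_mul]
  simp only [← abs_cos_pi_sub_sub_cos_rpow_mul_cos]
  rw [intervalIntegral.integral_comp_sub_left (fun θ ↦ |cos θ - cos φ| ^ s * cos (m * θ)),
    sub_sub_cancel, sub_zero]

theorem isBigO_chebCoeff_abs_sub_cos_rpow (hφ : φ ∈ Ioo 0 π) (hs : -1 < s) :
    chebCoeff (fun x ↦ |x - cos φ| ^ s) =O[atTop] fun m : ℕ ↦ (m : ℝ) ^ (-s - 1) := by
  have hJ {ψ : ℝ} (hψ : ψ ∈ Ioo 0 π) :
      (fun m : ℕ ↦ mehlerDirichlet ψ s m) =O[atTop] fun m : ℕ ↦ (m : ℝ) ^ (-s - 1) :=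
    (isBigO_mehlerDirichlet hψ hs).comp_tendsto tendsto_natCast_atTop_atTop
  have hsign : (fun m : ℕ ↦ (-1 : ℝ) ^ m * mehlerDirichlet (π - φ) s m)
      =O[atTop] fun m : ℕ ↦ (m : ℝ) ^ (-s - 1) :=
    (IsBigO.of_bound' (.of_forall fun m ↦ by simp)).trans
      (hJ ⟨sub_pos.2 hφ.2, sub_lt_self _ hφ.1⟩)
  rw [funext (chebCoeff_abs_sub_cos_rpow hφ hs)]
  exact ((hJ hφ).add hsign).const_mul_left _

end MehlerDirichlet

theorem abs_pow_class_Xs_general (s ξ : ℝ) (hs : -1 < s) (hξ : -1 < ξ) (hξ' : ξ < 1) :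
    ∃ A > 0, ∀ m : ℕ, 1 ≤ m →
      |chebCoeff (fun x => |x - ξ| ^ s) m| ≤ A * (m : ℝ) ^ (-s - 1) := by
  obtain ⟨φ, hφ, rfl⟩ : ∃ φ ∈ Ioo 0 π, cos φ = ξ :=
    Real.cosPartialHomeomorph.surjOn ⟨hξ, hξ'⟩
  obtain ⟨A, hA, hle⟩ := bound_of_isBigO_nat_atTop (isBigO_chebCoeff_abs_sub_cos_rpow hφ hs)
  refine ⟨A, hA, fun m hm ↦ ?_⟩
  have hpos : 0 < (m : ℝ) ^ (-s - 1) := Real.rpow_pos_of_pos (by exact_mod_cast hm) _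
  have hbound := hle hpos.ne'
  rwa [Real.norm_eq_abs, Real.norm_of_nonneg hpos.le] at hbound

/-- For `s > 0` and `-1 < ξ < 1`, the function `f_s(x) = |x - ξ|^s` is of class `X^s`:
its Chebyshev coefficients satisfy `|a_m| ≤ A·m^{-s-1}` for all `m ≥ 1`. -/
theorem abs_pow_class_Xs (s ξ : ℝ) (hs : 0 < s) (hξ : -1 < ξ) (hξ' : ξ < 1) :
    ∃ A > 0, ∀ m : ℕ, 1 ≤ m →
      |chebCoeff (fun x => |x - ξ| ^ s) m| ≤ A * (m : ℝ) ^ (-s - 1) :=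
  abs_pow_class_Xs_general s ξ (by linarith) hξ hξ'
end
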